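/- arXiv:1912.03132 — 7 statements merged into one kernel-verified Lean document; each statement's English description precedes it below -/
import Mathlib

section
/- Let N ≥ 2, δ ∈ (0,1), and let a be a Borel probability measure on [−1,1]^N ⊂ ℝ^N that is symmetric, i.e. invariant under the map q ↦ −q. Let û : ℝ^N → ℝ be four times continuously differentiable and suppose: (i) û(x + c𝟙) = û(x) + c for all x ∈ ℝ^N and c ∈ ℝ; (ii) û(x) ≤ max_i x_i + ((1−δ)/(2δ)) ∫ ⟨D²û(x)·q, q⟩ da(q) for all x; (iii) there is E₀ ≥ 0 with û(x) − max_i x_i ≤ E₀ for all x; (iv) there is K ≥ 0 with −D⁴û(y)[q,q,q,q] ≤ 24K for all y ∈ ℝ^N and all q in the support of a. Then for every x ∈ ℝ^N and every n ∈ ℕ, û(x) − E(n) ≤ g(x,n), where E(n) = (1−δ)^n E₀ + Σ_{τ=1}^n (1−δ)^τ K. -/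
open MeasureTheory Real

/-- The maximum coordinate `max_i x_i`. -/
noncomputable def vecMax {N : ℕ} (x : Fin N → ℝ) : ℝ := ⨆ i, x i

/-- Dynamic-programming value of the finite-horizon geometric-stopping expert game
against the adversary `a`: `g(x,0) = max_i x_i` and
`g(x,n+1) = δ max_i x_i + (1-δ) inf_{p ∈ Δ_N} Σ_i p_i ∫ g(x + q_i 𝟙 - q, n) da(q)`. -/
noncomputable def gVal {N : ℕ} (δ : ℝ) (a : Measure (Fin N → ℝ)) :
    ℕ → (Fin N → ℝ) → ℝ
  | 0 => fun x => vecMax x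
  | n + 1 => fun x =>
      δ * vecMax x + (1 - δ) *
        ⨅ p : stdSimplex ℝ (Fin N),
          ∑ i, (p : Fin N → ℝ) i * ∫ q, gVal δ a n (fun j => x j + q i - q j) ∂a

/-!
By symmetry of the adversary, `∫ û(x - q) da(q) = ½ ∫ (û(x + q) + û(x - q)) da(q)`. In the
fourth-order Taylor expansion of this even combination the odd terms cancel, so the integral is at
least `û(x) + ½ ∫ ⟨D²û(x)·q, q⟩ da(q) - K`. Together with the differential inequality (ii)
this makes `û` a subsolution, up to an error `(1 - δ) K`, of the dynamic programming equation
`v(x) = δ max_i x_i + (1 - δ) ∫ v(x - q) da(q)`.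

The infimum over `Δ_N` is attained at a vertex, and for `v = û` all vertices are equivalent because
`û(x + q_i 𝟙 - q) = û(x - q) + q_i` and `q_i` has mean zero. Hence the subsolution property
propagates to `g` by induction on the horizon, one application of the dynamic programming equation
turning an error `E` into `(1 - δ) (E + K)`.

Only the second moments of the adversary matter: `û` has at most linear growth from above, and the
Taylor bound then forces at most quadratic growth from below, on average over `±q`.
-/

open scoped NNReal

theorem vec_two_eq_const {α : Type*} (q : α) : ![q, q] = fun _ ↦ q := by
  ext i
  fin_cases i <;> rfl

theorem vec_four_eq_const {α : Type*} (q : α) : ![q, q, q, q] = fun _ ↦ q := by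
  ext i
  fin_cases i <;> rfl

section Taylor

variable {E F : Type*} [NormedAddCommGroup E] [NormedSpace ℝ E] [NormedAddCommGroup F]
  [NormedSpace ℝ F]

theorem iteratedDeriv_comp_add_smul {n : ℕ} {u : E → F} (hu : ContDiff ℝ n u) {k : ℕ} (hk : k ≤ n)
    (x q : E) (t : ℝ) :
    iteratedDeriv k (fun s : ℝ ↦ u (x + s • q)) t =
      iteratedFDeriv ℝ k u (x + t • q) fun _ ↦ q := by
  have hcomp : (fun s : ℝ ↦ u (x + s • q)) =
      (fun z ↦ u (x + z)) ∘ ContinuousLinearMap.toSpanSingleton ℝ q := by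
    ext s
    simp
  have hshift : ContDiff ℝ n fun z ↦ u (x + z) := by fun_prop
  rw [iteratedDeriv_eq_iteratedFDeriv, hcomp,
    ContinuousLinearMap.iteratedFDeriv_comp_right _ hshift t (by exact_mod_cast hk)]
  simp [iteratedFDeriv_comp_add_left]

open scoped Nat in
theorem taylor_sum_add_le_of_even {f : ℝ → ℝ} {n : ℕ} (hf : ContDiff ℝ n f) (hn : Even n) {m : ℝ}
    (hm : ∀ t, m ≤ iteratedDeriv n f t) (x₀ x : ℝ) :
    ∑ k ∈ Finset.range n, (x - x₀) ^ k / k ! * iteratedDeriv k f x₀ + m * (x - x₀) ^ n / n ! ≤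
      f x := by
  cases n with
  | zero => simpa using hm x
  | succ n =>
    obtain rfl | hx := eq_or_ne x₀ x
    · simp [Finset.sum_range_succ']
    obtain ⟨t, -, ht⟩ := taylor_mean_remainder_lagrange_iteratedDeriv hx hf.contDiffOn
    have hsum : taylorWithinEval f n (Set.uIcc x₀ x) x₀ x =
        ∑ k ∈ Finset.range (n + 1), (x - x₀) ^ k / k ! * iteratedDeriv k f x₀ := by
      rw [taylor_within_apply]
      refine Finset.sum_congr rfl fun k hk ↦ ?_
      rw [iteratedDerivWithin_eq_iteratedDeriv (uniqueDiffOn_uIcc hx)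
        (hf.contDiffAt.of_le (by exact_mod_cast (Finset.mem_range.1 hk).le)) Set.left_mem_uIcc,
        smul_eq_mul, inv_mul_eq_div]
    have hremainder : m * (x - x₀) ^ (n + 1) / (n + 1)! ≤
        iteratedDeriv (n + 1) f t * (x - x₀) ^ (n + 1) / (n + 1)! := by
      have := hn.pow_nonneg (x - x₀)
      gcongr
      exact hm t
    linarith

theorem two_mul_add_iteratedDeriv_two_le {f : ℝ → ℝ} (hf : ContDiff ℝ 4 f) {m : ℝ}
    (hm : ∀ t, m ≤ iteratedDeriv 4 f t) :
    2 * f 0 + iteratedDeriv 2 f 0 + m / 12 ≤ f 1 + f (-1) := by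
  have expansion (t : ℝ) : f 0 + t * iteratedDeriv 1 f 0 + t ^ 2 / 2 * iteratedDeriv 2 f 0 +
      t ^ 3 / 6 * iteratedDeriv 3 f 0 + m * t ^ 4 / 24 ≤ f t := by
    simpa [Finset.sum_range_succ, Nat.factorial] using
      taylor_sum_add_le_of_even hf (by decide) hm 0 t
  have forward := expansion 1
  have backward := expansion (-1)
  linarith

theorem two_mul_add_iteratedFDeriv_two_le {u : E → ℝ} (hu : ContDiff ℝ 4 u) {q : E} {m : ℝ}
    (hm : ∀ y, m ≤ iteratedFDeriv ℝ 4 u y ![q, q, q, q]) (x : E) :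
    2 * u x + iteratedFDeriv ℝ 2 u x ![q, q] + m / 12 ≤ u (x + q) + u (x - q) := by
  have hline : ContDiff ℝ 4 fun s : ℝ ↦ u (x + s • q) := by fun_prop
  have along_line := two_mul_add_iteratedDeriv_two_le hline (m := m) fun t ↦ by
    rw [iteratedDeriv_comp_add_smul hu le_rfl]
    simpa only [vec_four_eq_const] using hm (x + t • q)
  rw [iteratedDeriv_comp_add_smul hu (by norm_num)] at along_line
  simpa [vec_two_eq_const, ← sub_eq_add_neg] using along_line

end Taylor

section Symmetric

variable {E : Type*} [NormedAddCommGroup E] [MeasurableSpace E] {μ : Measure E}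

theorem integrable_of_le_of_le_add_comp_neg [BorelSpace E] [μ.IsNegInvariant] {v l h : E → ℝ}
    (hv : AEStronglyMeasurable v μ) (hl : Integrable l μ) (hh : Integrable h μ)
    (hvh : ∀ᵐ q ∂μ, v q ≤ h q) (hlv : ∀ᵐ q ∂μ, l q ≤ v q + v (-q)) :
    Integrable v μ := by
  have hvh_neg : ∀ᵐ q ∂μ, v (-q) ≤ h (-q) :=
    (Measure.measurePreserving_neg μ).quasiMeasurePreserving.ae hvh
  refine integrable_of_le_of_le hv ?_ hvh (hl.sub hh.comp_neg) hh
  filter_upwards [hlv, hvh_neg] with q hq hq'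
  simp only [Pi.sub_apply]
  linarith

theorem integral_le_two_mul_integral_of_le_add_comp_neg [BorelSpace E] [μ.IsNegInvariant]
    {v l : E → ℝ} (hv : Integrable v μ) (hl : Integrable l μ) (hlv : ∀ᵐ q ∂μ, l q ≤ v q + v (-q)) :
    ∫ q, l q ∂μ ≤ 2 * ∫ q, v q ∂μ :=
  calc ∫ q, l q ∂μ ≤ ∫ q, (v q + v (-q)) ∂μ := integral_mono_ae hl (hv.add hv.comp_neg) hlv
    _ = 2 * ∫ q, v q ∂μ := by
      rw [integral_add hv hv.comp_neg, integral_neg_eq_self, two_mul]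

theorem integral_apply_eq_zero {ι : Type*} {μ : Measure (ι → ℝ)} [μ.IsNegInvariant] (i : ι) :
    ∫ q, q i ∂μ = 0 := by
  have hneg := integral_neg_eq_self (fun q : ι → ℝ ↦ q i) μ
  simp only [Pi.neg_apply, integral_neg] at hneg
  linarith

variable [NormedSpace ℝ E]

theorem integrable_continuousMultilinearMap_diagonal {F : Type*} [NormedAddCommGroup F]
    [NormedSpace ℝ F] {k : ℕ} [IsFiniteMeasure μ] (hμ : MemLp id k μ)
    (M : ContinuousMultilinearMap ℝ (fun _ : Fin k ↦ E) F) :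
    Integrable (fun q ↦ M fun _ ↦ q) μ := by
  have hcont : Continuous fun q ↦ M fun _ ↦ q := by fun_prop
  refine (hμ.integrable_norm_pow'.const_mul ‖M‖).mono'
    (hcont.comp_aestronglyMeasurable hμ.aestronglyMeasurable) (.of_forall fun q ↦ ?_)
  simpa using M.le_opNorm fun _ ↦ q

theorem integrable_iteratedFDeriv_two [IsFiniteMeasure μ] (hμ : MemLp id 2 μ) (u : E → ℝ) (x : E) :
    Integrable (fun q ↦ iteratedFDeriv ℝ 2 u x ![q, q]) μ := by
  simp only [vec_two_eq_const]
  exact integrable_continuousMultilinearMap_diagonal hμ (iteratedFDeriv ℝ 2 u x)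

theorem ae_taylor_le_add_comp_neg {u : E → ℝ} (hu : ContDiff ℝ 4 u) {m : ℝ}
    (hm : ∀ᵐ q ∂μ, ∀ y, m ≤ iteratedFDeriv ℝ 4 u y ![q, q, q, q]) (x : E) :
    ∀ᵐ q ∂μ, 2 * u x + iteratedFDeriv ℝ 2 u x ![q, q] + m / 12 ≤ u (x - q) + u (x - -q) := by
  filter_upwards [hm] with q hq
  simpa [add_comm] using two_mul_add_iteratedFDeriv_two_le hu hq x

variable [BorelSpace E] [μ.IsNegInvariant]

theorem integrable_comp_sub_of_le [IsFiniteMeasure μ] (hμ : MemLp id 2 μ)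
    {u : E → ℝ} (hu : ContDiff ℝ 4 u) {m : ℝ}
    (hm : ∀ᵐ q ∂μ, ∀ y, m ≤ iteratedFDeriv ℝ 4 u y ![q, q, q, q]) {x : E} {h : E → ℝ}
    (hh : Integrable h μ) (huh : ∀ᵐ q ∂μ, u (x - q) ≤ h q) :
    Integrable (fun q ↦ u (x - q)) μ := by
  have hcont : Continuous fun q ↦ u (x - q) := by fun_prop
  have hD2 := integrable_iteratedFDeriv_two hμ u x
  exact integrable_of_le_of_le_add_comp_neg
    (hcont.comp_aestronglyMeasurable hμ.aestronglyMeasurable)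
    (((integrable_const _).fun_add hD2).fun_add (integrable_const _)) hh huh
    (ae_taylor_le_add_comp_neg hu hm x)

theorem add_integral_iteratedFDeriv_two_le_integral_comp_sub [IsProbabilityMeasure μ]
    (hμ : MemLp id 2 μ) {u : E → ℝ} (hu : ContDiff ℝ 4 u) {m : ℝ}
    (hm : ∀ᵐ q ∂μ, ∀ y, m ≤ iteratedFDeriv ℝ 4 u y ![q, q, q, q]) {x : E}
    (hint : Integrable (fun q ↦ u (x - q)) μ) :
    u x + (∫ q, iteratedFDeriv ℝ 2 u x ![q, q] ∂μ) / 2 + m / 24 ≤ ∫ q, u (x - q) ∂μ := by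
  have hD2 := integrable_iteratedFDeriv_two hμ u x
  have hconst_add := (integrable_const (2 * u x)).fun_add hD2
  have havg := integral_le_two_mul_integral_of_le_add_comp_neg hint
    (hconst_add.fun_add (integrable_const _)) (ae_taylor_le_add_comp_neg hu hm x)
  rw [integral_add hconst_add (integrable_const _), integral_add (integrable_const _) hD2] at havg
  simp only [integral_const, probReal_univ, one_smul] at havg
  linarith

end Symmetric

section Lipschitz

variable {X ι Ω E F : Type*} [PseudoMetricSpace X] [NormedAddCommGroup E] [NormedAddCommGroup F]
  {K : ℝ≥0} [MeasurableSpace Ω] {μ : Measure Ω}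

theorem lipschitzWith_iSup [Finite ι] {f : ι → X → ℝ} (hf : ∀ i, LipschitzWith K (f i)) :
    LipschitzWith K fun x ↦ ⨆ i, f i x := by
  cases isEmpty_or_nonempty ι
  · simpa using LipschitzWith.const' 0
  refine LipschitzWith.of_le_add_mul K fun x y ↦ ciSup_le fun i ↦ ?_
  calc f i x ≤ f i y + K * dist x y := (hf i).le_add_mul x y
    _ ≤ (⨆ i, f i y) + K * dist x y := by
      gcongr
      exact le_ciSup (Set.finite_range fun i ↦ f i y).bddAbove i

theorem lipschitzWith_iInf [Finite ι] {f : ι → X → ℝ} (hf : ∀ i, LipschitzWith K (f i)) :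
    LipschitzWith K fun x ↦ ⨅ i, f i x := by
  cases isEmpty_or_nonempty ι
  · simpa using LipschitzWith.const' 0
  refine LipschitzWith.of_le_add_mul K fun x y ↦ sub_le_iff_le_add.1 <| le_ciInf fun i ↦ ?_
  rw [sub_le_iff_le_add]
  calc ⨅ i, f i x ≤ f i x := ciInf_le (Set.finite_range fun i ↦ f i x).bddBelow i
    _ ≤ f i y + K * dist x y := (hf i).le_add_mul x y

theorem lipschitzWith_integral [NormedSpace ℝ F] [IsProbabilityMeasure μ] {f : X → Ω → F}
    (hf : ∀ x, Integrable (f x) μ) (hlip : ∀ ω, LipschitzWith K fun x ↦ f x ω) :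
    LipschitzWith K fun x ↦ ∫ ω, f x ω ∂μ := by
  refine LipschitzWith.of_dist_le_mul fun x y ↦ ?_
  rw [dist_eq_norm, ← integral_sub (hf x) (hf y)]
  simpa using norm_integral_le_of_norm_le_const (μ := μ) (.of_forall fun ω ↦ by
    simpa [dist_eq_norm] using (hlip ω).dist_le_mul x y)

theorem integrable_comp_of_lipschitzWith [IsFiniteMeasure μ] {v : E → F} (hv : LipschitzWith K v)
    {Y : Ω → E} (hY : Integrable Y μ) : Integrable (fun ω ↦ v (Y ω)) μ := by
  refine ((integrable_const ‖v 0‖).add (hY.norm.const_mul K)).mono'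
    (hv.continuous.comp_aestronglyMeasurable hY.aestronglyMeasurable) (.of_forall fun ω ↦ ?_)
  calc ‖v (Y ω)‖ ≤ ‖v 0‖ + ‖v (Y ω) - v 0‖ := norm_le_norm_add_norm_sub' _ _
    _ ≤ ‖v 0‖ + K * ‖Y ω‖ := by
      gcongr
      simpa using hv.norm_sub_le (Y ω) 0

end Lipschitz

theorem iInf_stdSimplex_sum_mul {ι : Type*} [Fintype ι] (c : ι → ℝ) :
    ⨅ p : stdSimplex ℝ ι, ∑ i, (p : ι → ℝ) i * c i = ⨅ i, c i := by
  classical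
  cases isEmpty_or_nonempty ι
  · simp
  have iInf_le_sum (p : stdSimplex ℝ ι) : ⨅ i, c i ≤ ∑ i, (p : ι → ℝ) i * c i :=
    calc ⨅ i, c i = ∑ i, (p : ι → ℝ) i * ⨅ i, c i := by
          rw [← Finset.sum_mul, stdSimplex.sum_eq_one, one_mul]
      _ ≤ ∑ i, (p : ι → ℝ) i * c i := Finset.sum_le_sum fun i _ ↦
        mul_le_mul_of_nonneg_left (ciInf_le (Set.finite_range c).bddBelow i) (p.2.1 i)
  refine le_antisymm (le_ciInf fun i ↦ ?_) (le_ciInf iInf_le_sum)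
  refine (ciInf_le ⟨_, Set.forall_mem_range.2 iInf_le_sum⟩
    ⟨Pi.single i 1, single_mem_stdSimplex ℝ i⟩).trans_eq ?_
  simp [Pi.single_apply]

theorem pow_mul_add_sum_Icc_succ {R : Type*} [CommRing R] (r E K : R) (n : ℕ) :
    r ^ (n + 1) * E + ∑ τ ∈ Finset.Icc 1 (n + 1), r ^ τ * K =
      r * (r ^ n * E + ∑ τ ∈ Finset.Icc 1 n, r ^ τ * K + K) := by
  induction n with
  | zero => simp [mul_add]
  | succ n ih =>
    rw [Finset.sum_Icc_succ_top (by omega)] at ih ⊢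
    rw [Finset.sum_Icc_succ_top (by omega)]
    linear_combination ih

section Game

variable {N : ℕ} {δ : ℝ} {a : Measure (Fin N → ℝ)}

/-- The increment `q_i 𝟙 - q` of the regret vector when the forecaster follows expert `i` and the
experts' gains are `q`, as a continuous linear map in `q`. -/
noncomputable def regretIncrement (i : Fin N) : (Fin N → ℝ) →L[ℝ] (Fin N → ℝ) :=
  ContinuousLinearMap.pi fun j ↦
    ContinuousLinearMap.proj (R := ℝ) (φ := fun _ ↦ ℝ) i - ContinuousLinearMap.proj j

theorem regretIncrement_apply (i j : Fin N) (q : Fin N → ℝ) :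
    regretIncrement i q j = q i - q j :=
  rfl

theorem gVal_succ (δ : ℝ) (a : Measure (Fin N → ℝ)) (n : ℕ) (x : Fin N → ℝ) :
    gVal δ a (n + 1) x =
      δ * vecMax x + (1 - δ) * ⨅ i, ∫ q, gVal δ a n (x + regretIncrement i q) ∂a := by
  simp only [gVal, iInf_stdSimplex_sum_mul, add_sub_assoc]
  rfl

theorem lipschitzWith_vecMax : LipschitzWith 1 (vecMax : (Fin N → ℝ) → ℝ) :=
  lipschitzWith_iSup fun i ↦ LipschitzWith.eval i

theorem integrable_comp_add_regretIncrement [IsFiniteMeasure a] (ha : Integrable id a)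
    {K : ℝ≥0} {v : (Fin N → ℝ) → ℝ} (hv : LipschitzWith K v) (x : Fin N → ℝ) (i : Fin N) :
    Integrable (fun q ↦ v (x + regretIncrement i q)) a :=
  integrable_comp_of_lipschitzWith hv
    ((integrable_const x).add ((regretIncrement i).integrable_comp ha))

theorem lipschitzWith_gVal [IsProbabilityMeasure a] (hδ : δ ∈ Set.Icc 0 1) (ha : Integrable id a)
    (n : ℕ) : LipschitzWith 1 (gVal δ a n) := by
  induction n with
  | zero => exact lipschitzWith_vecMax
  | succ n ih =>
    have hcont : LipschitzWith 1
        fun x ↦ ⨅ i, ∫ q, gVal δ a n (x + regretIncrement i q) ∂a :=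
      lipschitzWith_iInf fun i ↦ lipschitzWith_integral
        (fun x ↦ integrable_comp_add_regretIncrement ha ih x i)
        fun q ↦ by
          simpa [Function.comp_def] using
            ih.comp (LipschitzWith.id.add (.const (regretIncrement i q)))
    refine LipschitzWith.of_le_add fun x y ↦ ?_
    have hmax := mul_le_mul_of_nonneg_left (lipschitzWith_vecMax.le_add_mul x y) hδ.1
    have hinf := mul_le_mul_of_nonneg_left (hcont.le_add_mul x y) (sub_nonneg.2 hδ.2)
    rw [gVal_succ, gVal_succ]
    push_cast at hmax hinf
    linarith

theorem nonempty_of_apply_add_const {u : (Fin N → ℝ) → ℝ}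
    (hlin : ∀ (x : Fin N → ℝ) (c : ℝ), u (fun j ↦ x j + c) = u x + c) : Nonempty (Fin N) := by
  by_contra hempty
  rw [not_nonempty_iff] at hempty
  have h := hlin 0 1
  rw [Subsingleton.elim (fun j ↦ (0 : Fin N → ℝ) j + 1) 0] at h
  linarith

theorem apply_add_regretIncrement {u : (Fin N → ℝ) → ℝ}
    (hlin : ∀ (x : Fin N → ℝ) (c : ℝ), u (fun j ↦ x j + c) = u x + c) (x q : Fin N → ℝ)
    (i : Fin N) : u (x + regretIncrement i q) = u (x - q) + q i := by
  rw [← hlin]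
  congr 1
  ext j
  simp only [Pi.add_apply, Pi.sub_apply, regretIncrement_apply]
  ring

theorem integral_sub_le_iInf_integral [Nonempty (Fin N)] [IsProbabilityMeasure a]
    [a.IsNegInvariant] (ha : Integrable id a) {u v : (Fin N → ℝ) → ℝ}
    (hlin : ∀ (x : Fin N → ℝ) (c : ℝ), u (fun j ↦ x j + c) = u x + c)
    {K : ℝ≥0} (hv : LipschitzWith K v) {ε : ℝ} (huv : ∀ y, u y - ε ≤ v y) {x : Fin N → ℝ}
    (hu : Integrable (fun q ↦ u (x - q)) a) :
    ∫ q, u (x - q) ∂a - ε ≤ ⨅ i, ∫ q, v (x + regretIncrement i q) ∂a := by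
  refine le_ciInf fun i ↦ ?_
  have hcoord : Integrable (fun q : Fin N → ℝ ↦ q i) a := ha.eval i
  calc ∫ q, u (x - q) ∂a - ε = ∫ q, (u (x - q) + q i - ε) ∂a := by
        rw [integral_sub (hu.fun_add hcoord) (integrable_const ε), integral_add hu hcoord,
          integral_apply_eq_zero]
        simp
    _ ≤ ∫ q, v (x + regretIncrement i q) ∂a := by
        refine integral_mono ((hu.fun_add hcoord).sub (integrable_const ε))
          (integrable_comp_add_regretIncrement ha hv x i) fun q ↦ ?_
        simpa only [apply_add_regretIncrement hlin] using huv (x + regretIncrement i q)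

theorem integrable_comp_sub_of_sub_vecMax_le [IsFiniteMeasure a] [a.IsNegInvariant]
    (ha : MemLp id 2 a) {u : (Fin N → ℝ) → ℝ} (hu : ContDiff ℝ 4 u) {m : ℝ}
    (hm : ∀ᵐ q ∂a, ∀ y, m ≤ iteratedFDeriv ℝ 4 u y ![q, q, q, q])
    {E : ℝ} (hE : ∀ y, u y - vecMax y ≤ E) (x : Fin N → ℝ) :
    Integrable (fun q ↦ u (x - q)) a := by
  have hmax : Integrable (fun q ↦ vecMax (x - q)) a :=
    integrable_comp_of_lipschitzWith lipschitzWith_vecMax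
      ((integrable_const x).sub (ha.integrable one_le_two))
  refine integrable_comp_sub_of_le ha hu hm (hmax.add (integrable_const E)) (.of_forall fun q ↦ ?_)
  simpa [add_comm] using hE (x - q)

theorem le_mul_vecMax_add_mul_integral [IsProbabilityMeasure a] [a.IsNegInvariant]
    (ha : MemLp id 2 a) (hδ : δ ∈ Set.Ioc 0 1) {u : (Fin N → ℝ) → ℝ} (hu : ContDiff ℝ 4 u)
    {K : ℝ} (hD4 : ∀ᵐ q ∂a, ∀ y, -(24 * K) ≤ iteratedFDeriv ℝ 4 u y ![q, q, q, q])
    {x : Fin N → ℝ} (hsub : u x ≤ vecMax x +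
      (1 - δ) / (2 * δ) * ∫ q, iteratedFDeriv ℝ 2 u x ![q, q] ∂a)
    (hint : Integrable (fun q ↦ u (x - q)) a) :
    u x ≤ δ * vecMax x + (1 - δ) * (∫ q, u (x - q) ∂a + K) := by
  set D2 := ∫ q, iteratedFDeriv ℝ 2 u x ![q, q] ∂a
  have hδ₀ : δ ≠ 0 := hδ.1.ne'
  have htaylor : u x + D2 / 2 ≤ ∫ q, u (x - q) ∂a + K := by
    linarith [add_integral_iteratedFDeriv_two_le_integral_comp_sub ha hu hD4 hint]
  calc u x = δ * u x + (1 - δ) * u x := by ring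
    _ ≤ δ * (vecMax x + (1 - δ) / (2 * δ) * D2) + (1 - δ) * u x := by
      gcongr
      exact hδ.1.le
    _ = δ * vecMax x + (1 - δ) * (u x + D2 / 2) := by
      field_simp
      ring
    _ ≤ δ * vecMax x + (1 - δ) * (∫ q, u (x - q) ∂a + K) := by
      have := mul_le_mul_of_nonneg_left htaylor (sub_nonneg.2 hδ.2)
      gcongr

end Game

theorem geometric_horizon_lower_bound_symmetric_general
    {N : ℕ} {δ : ℝ} (hδ : δ ∈ Set.Ioc 0 1)
    {a : Measure (Fin N → ℝ)} [IsProbabilityMeasure a] [a.IsNegInvariant] (ha : MemLp id 2 a)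
    {u : (Fin N → ℝ) → ℝ} (hu : ContDiff ℝ 4 u)
    (hlin : ∀ (x : Fin N → ℝ) (c : ℝ), u (fun j ↦ x j + c) = u x + c)
    (hsub : ∀ x, u x ≤ vecMax x +
      (1 - δ) / (2 * δ) * ∫ q, iteratedFDeriv ℝ 2 u x ![q, q] ∂a)
    {E₀ : ℝ} (hbound : ∀ x, u x - vecMax x ≤ E₀)
    {K : ℝ} (hD4 : ∀ᵐ q ∂a, ∀ y, -iteratedFDeriv ℝ 4 u y ![q, q, q, q] ≤ 24 * K)
    (x : Fin N → ℝ) (n : ℕ) :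
    u x - ((1 - δ) ^ n * E₀ + ∑ τ ∈ Finset.Icc 1 n, (1 - δ) ^ τ * K) ≤ gVal δ a n x := by
  have hnonempty := nonempty_of_apply_add_const hlin
  have ha₁ : Integrable id a := ha.integrable one_le_two
  have hD4' : ∀ᵐ q ∂a, ∀ y, -(24 * K) ≤ iteratedFDeriv ℝ 4 u y ![q, q, q, q] :=
    hD4.mono fun q hq y ↦ neg_le.1 (hq y)
  have hint := integrable_comp_sub_of_sub_vecMax_le ha hu hD4' hbound
  induction n generalizing x with
  | zero => simpa [gVal, add_comm] using hbound x
  | succ n ih =>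
    have hstep := le_mul_vecMax_add_mul_integral ha hδ hu hD4' (hsub x) (hint x)
    have hinf := integral_sub_le_iInf_integral ha₁ hlin
      (lipschitzWith_gVal (Set.Ioc_subset_Icc_self hδ) ha₁ n) ih (hint x)
    rw [gVal_succ, pow_mul_add_sum_Icc_succ]
    linarith [mul_le_mul_of_nonneg_left hinf (sub_nonneg.2 hδ.2)]

theorem geometric_horizon_lower_bound_symmetric
    {N : ℕ} (hN : 2 ≤ N) (δ : ℝ) (hδ : δ ∈ Set.Ioo (0 : ℝ) 1)
    (a : Measure (Fin N → ℝ)) [IsProbabilityMeasure a]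
    (ha_supp : ∀ᵐ q ∂a, ∀ i, q i ∈ Set.Icc (-1 : ℝ) 1)
    (ha_symm : Measure.map (fun q => -q) a = a)
    (uhat : (Fin N → ℝ) → ℝ) (hu : ContDiff ℝ 4 uhat)
    (hlin : ∀ (x : Fin N → ℝ) (c : ℝ), uhat (fun j => x j + c) = uhat x + c)
    (hsub : ∀ x, uhat x ≤ vecMax x +
      (1 - δ) / (2 * δ) * ∫ q, iteratedFDeriv ℝ 2 uhat x ![q, q] ∂a)
    (E₀ : ℝ) (hE₀ : 0 ≤ E₀) (hbound : ∀ x, uhat x - vecMax x ≤ E₀)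
    (K : ℝ) (hK : 0 ≤ K)
    (hD4 : ∀ᵐ q ∂a, ∀ y, -iteratedFDeriv ℝ 4 uhat y ![q, q, q, q] ≤ 24 * K) :
    ∀ (x : Fin N → ℝ) (n : ℕ),
      uhat x - ((1 - δ) ^ n * E₀ + ∑ τ ∈ Finset.Icc 1 n, (1 - δ) ^ τ * K)
        ≤ gVal δ a n x := by
  have : a.IsNegInvariant := ⟨ha_symm⟩
  have ha : MemLp id 2 a := .of_bound aestronglyMeasurable_id 1 <| ha_supp.mono fun q hq ↦
    (pi_norm_le_iff_of_nonneg zero_le_one).2 fun i ↦ abs_le.2 (hq i)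
  exact geometric_horizon_lower_bound_symmetric_general (Set.Ioo_subset_Ioc_self hδ) ha hu hlin hsub
    hbound hD4
end

section
/- Let N ≥ 2, δ ∈ (0,1), set c = (1−δ)/(2δ), and let a be a Borel probability measure on [−1,1]^N. Let u : ℝ^N × (−∞,0] → ℝ be twice continuously differentiable in x and continuously differentiable in t on ℝ^N × (−∞,0), and suppose: (i) u(x + c'𝟙, t) = u(x,t) + c' for all x, t < 0, c' ∈ ℝ; (ii) ∂_t u(x,t) + c ∫ ⟨D²u(x,t)·q, q⟩ da(q) ≥ 0 for all x and t < 0; (iii) there is a constant C with u(x,−δ) − max_i x_i ≤ C for all x; (iv) for each x the functions t ↦ e^t u(x,t) and t ↦ e^t ∂_t u(x,t) are integrable on (−∞,−δ), lim_{t→−∞} e^t u(x,t) = 0, and the function û(x) := e^δ ∫_{−∞}^{−δ} e^t u(x,t) dt − C is twice continuously differentiable with D²û(x) = e^δ ∫_{−∞}^{−δ} e^t D²u(x,t) dt; (v) (q,t) ↦ e^t ⟨D²u(x,t)·q, q⟩ is integrable with respect to a ⊗ Lebesgue on [−1,1]^N × (−∞,−δ) for each x. Then û satisfies û(x + c'𝟙)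 = û(x) + c' for all x, c', and û(x) ≤ max_i x_i + c ∫ ⟨D²û(x)·q, q⟩ da(q) for all x ∈ ℝ^N. -/
open MeasureTheory Real

/-!
The density `e^δ e^t` on `(-∞, -δ)` is a probability density, so averaging against it preserves
linearity along `𝟙`. Integrating `(e^t u)' = e^t u + e^t u_t` gives
`avg u = u(·, -δ) - avg u_t`, where the parabolic inequality bounds `-avg u_t` by
`c avg (∫ ⟨D²u q, q⟩ da)`. By Fubini and the formula for `D²û`, this is `c ∫ ⟨D²û q, q⟩ da`.
-/

/-- The average of `f` over `(-∞, -δ)` against the probability density `e^δ e^t`, i.e. the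
Laplace-type transform that turns a fixed-horizon potential into a geometric-stopping one.
It is the junk value `0` when `e^t f t` is not integrable. -/
noncomputable def discountedAverage (δ : ℝ) (f : ℝ → ℝ) : ℝ :=
  exp δ * ∫ t in Set.Iio (-δ), exp t * f t

section discountedAverage

variable {δ : ℝ} {f g : ℝ → ℝ}

lemma discountedAverage_congr (hfg : Set.EqOn f g (Set.Iio (-δ))) :
    discountedAverage δ f = discountedAverage δ g := by
  unfold discountedAverage
  congr 1
  exact setIntegral_congr_fun measurableSet_Iio fun t ht ↦ congrArg (exp t * ·) (hfg ht)

lemma discountedAverage_nonneg (hf : ∀ t < -δ, 0 ≤ f t) : 0 ≤ discountedAverage δ f :=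
  mul_nonneg (exp_nonneg δ) <|
    setIntegral_nonneg measurableSet_Iio fun t ht ↦ mul_nonneg (exp_nonneg t) (hf t ht)

lemma discountedAverage_add (hf : IntegrableOn (fun t ↦ exp t * f t) (Set.Iio (-δ)))
    (hg : IntegrableOn (fun t ↦ exp t * g t) (Set.Iio (-δ))) :
    discountedAverage δ (fun t ↦ f t + g t) = discountedAverage δ f + discountedAverage δ g := by
  simp only [discountedAverage, mul_add, integral_add hf hg]

lemma discountedAverage_const_mul (c : ℝ) (f : ℝ → ℝ) :
    discountedAverage δ (fun t ↦ c * f t) = c * discountedAverage δ f := by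
  simp only [discountedAverage, mul_left_comm _ c, integral_const_mul]

lemma discountedAverage_const (δ c : ℝ) : discountedAverage δ (fun _ ↦ c) = c := by
  rw [discountedAverage, integral_mul_const, ← integral_Iic_eq_integral_Iio, integral_exp_Iic,
    ← mul_assoc, ← exp_add, add_neg_cancel, exp_zero, one_mul]

lemma discountedAverage_add_const (hf : IntegrableOn (fun t ↦ exp t * f t) (Set.Iio (-δ)))
    (c : ℝ) : discountedAverage δ (fun t ↦ f t + c) = discountedAverage δ f + c := by
  have hc : IntegrableOn (fun t ↦ exp t * c) (Set.Iio (-δ)) :=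
    ((integrableOn_exp_Iic (-δ)).mono_set Set.Iio_subset_Iic_self).mul_const c
  rw [discountedAverage_add hf hc, discountedAverage_const]

lemma discountedAverage_add_discountedAverage_deriv {f' : ℝ → ℝ}
    (hderiv : ∀ t ≤ -δ, HasDerivAt f (f' t) t)
    (hf : IntegrableOn (fun t ↦ exp t * f t) (Set.Iio (-δ)))
    (hf' : IntegrableOn (fun t ↦ exp t * f' t) (Set.Iio (-δ)))
    (hlim : Filter.Tendsto (fun t ↦ exp t * f t) Filter.atBot (nhds 0)) :
    discountedAverage δ f + discountedAverage δ f' = f (-δ) := by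
  have hintegral : ∫ t in Set.Iic (-δ), (exp t * f t + exp t * f' t) = exp (-δ) * f (-δ) - 0 :=
    integral_Iic_of_hasDerivAt_of_tendsto' (fun t ht ↦ (hasDerivAt_exp t).mul (hderiv t ht))
      ((integrableOn_Iic_iff_integrableOn_Iio).2 (hf.add hf')) hlim
  rw [integral_Iic_eq_integral_Iio, integral_add hf hf', sub_zero] at hintegral
  rw [discountedAverage, discountedAverage, ← mul_add, hintegral, ← mul_assoc, ← exp_add,
    add_neg_cancel, exp_zero, one_mul]

variable {Ω : Type*} [MeasurableSpace Ω] {a : Measure Ω} [SFinite a] {h : Ω → ℝ → ℝ}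

lemma integral_discountedAverage
    (hh : Integrable (fun p : Ω × ℝ ↦ exp p.2 * h p.1 p.2)
      (a.prod (volume.restrict (Set.Iio (-δ))))) :
    ∫ q, discountedAverage δ (h q) ∂a = discountedAverage δ (fun t ↦ ∫ q, h q t ∂a) := by
  simp only [discountedAverage, integral_const_mul]
  rw [integral_integral_swap hh]
  simp only [integral_const_mul]

lemma integrableOn_exp_mul_integral
    (hh : Integrable (fun p : Ω × ℝ ↦ exp p.2 * h p.1 p.2)
      (a.prod (volume.restrict (Set.Iio (-δ))))) :
    IntegrableOn (fun t ↦ exp t * ∫ q, h q t ∂a) (Set.Iio (-δ)) := by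
  simpa only [IntegrableOn, integral_const_mul] using hh.integral_prod_right

lemma discountedAverage_le_add_integral {f' : ℝ → ℝ} {c : ℝ}
    (hderiv : ∀ t ≤ -δ, HasDerivAt f (f' t) t)
    (hf : IntegrableOn (fun t ↦ exp t * f t) (Set.Iio (-δ)))
    (hf' : IntegrableOn (fun t ↦ exp t * f' t) (Set.Iio (-δ)))
    (hlim : Filter.Tendsto (fun t ↦ exp t * f t) Filter.atBot (nhds 0))
    (hh : Integrable (fun p : Ω × ℝ ↦ exp p.2 * h p.1 p.2)
      (a.prod (volume.restrict (Set.Iio (-δ)))))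
    (hineq : ∀ t < -δ, 0 ≤ f' t + c * ∫ q, h q t ∂a) :
    discountedAverage δ f ≤ f (-δ) + c * ∫ q, discountedAverage δ (h q) ∂a := by
  have hparts := discountedAverage_add_discountedAverage_deriv hderiv hf hf' hlim
  have hch : IntegrableOn (fun t ↦ exp t * (c * ∫ q, h q t ∂a)) (Set.Iio (-δ)) := by
    simpa only [IntegrableOn, mul_left_comm _ c] using
      (integrableOn_exp_mul_integral hh).const_mul c
  have havg : 0 ≤ discountedAverage δ f' + c * ∫ q, discountedAverage δ (h q) ∂a :=
    calc 0 ≤ discountedAverage δ (fun t ↦ f' t + c * ∫ q, h q t ∂a) :=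
          discountedAverage_nonneg hineq
      _ = discountedAverage δ f' + c * ∫ q, discountedAverage δ (h q) ∂a := by
          rw [discountedAverage_add hf' hch, discountedAverage_const_mul,
            integral_discountedAverage hh]
  linarith

end discountedAverage

/-- `L f x q` plays the role of `⟨D²f(x) q, q⟩`, `v` that of `𝟙`, and `φ` that of the maximum
coordinate. -/
theorem fixed_horizon_to_geometric_lower_bound_general
    {E Ω : Type*} [AddCommGroup E] [Module ℝ E] [MeasurableSpace Ω] {δ c C : ℝ}
    {a : Measure Ω} [SFinite a] {L : (E → ℝ) → E → Ω → ℝ} {v : E} {φ uhat : E → ℝ}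
    {u u' : E → ℝ → ℝ}
    (hderiv : ∀ x, ∀ t ≤ -δ, HasDerivAt (u x) (u' x t) t)
    (hlin : ∀ x, ∀ t < -δ, ∀ c' : ℝ, u (x + c' • v) t = u x t + c')
    (hineq : ∀ x, ∀ t < -δ, 0 ≤ u' x t + c * ∫ q, L (fun y ↦ u y t) x q ∂a)
    (hC : ∀ x, u x (-δ) - φ x ≤ C)
    (hint : ∀ x, IntegrableOn (fun t ↦ exp t * u x t) (Set.Iio (-δ)))
    (hint' : ∀ x, IntegrableOn (fun t ↦ exp t * u' x t) (Set.Iio (-δ)))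
    (hlim : ∀ x, Filter.Tendsto (fun t ↦ exp t * u x t) Filter.atBot (nhds 0))
    (huhat : ∀ x, uhat x = discountedAverage δ (u x) - C)
    (hL : ∀ x q, L uhat x q = discountedAverage δ (fun t ↦ L (fun y ↦ u y t) x q))
    (hprod : ∀ x, Integrable (fun p : Ω × ℝ ↦ exp p.2 * L (fun y ↦ u y p.2) x p.1)
      (a.prod (volume.restrict (Set.Iio (-δ))))) :
    (∀ x (c' : ℝ), uhat (x + c' • v) = uhat x + c') ∧
      ∀ x, uhat x ≤ φ x + c * ∫ q, L uhat x q ∂a := by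
  refine ⟨fun x c' ↦ ?_, fun x ↦ ?_⟩
  · have hshift : discountedAverage δ (u (x + c' • v)) = discountedAverage δ (u x) + c' :=
      (discountedAverage_congr fun t ht ↦ hlin x t ht c').trans
        (discountedAverage_add_const (hint x) c')
    rw [huhat, huhat, hshift, add_sub_right_comm]
  · have hle := discountedAverage_le_add_integral (hderiv x) (hint x) (hint' x) (hlim x)
      (hprod x) (hineq x)
    simp only [huhat x, hL]
    linarith [hC x]

theorem fixed_horizon_to_geometric_lower_bound
    {N : ℕ} (hN : 2 ≤ N) (δ : ℝ) (hδ : δ ∈ Set.Ioo (0 : ℝ) 1)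
    (c : ℝ) (hc : c = (1 - δ) / (2 * δ))
    (a : Measure (Fin N → ℝ)) [IsProbabilityMeasure a]
    (ha_supp : ∀ᵐ q ∂a, ∀ i, q i ∈ Set.Icc (-1 : ℝ) 1)
    (u : (Fin N → ℝ) → ℝ → ℝ)
    (hux : ∀ t : ℝ, t < 0 → ContDiff ℝ 2 (fun y => u y t))
    (hut : ∀ x : Fin N → ℝ, ContDiffOn ℝ 1 (u x) (Set.Iio 0))
    -- (i) linearity in the direction of the all-ones vector
    (hlin : ∀ (x : Fin N → ℝ) (t : ℝ), t < 0 → ∀ c' : ℝ,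
      u (fun j => x j + c') t = u x t + c')
    -- (ii) the parabolic inequality u_t + c ∫ ⟨D²u·q,q⟩ da(q) ≥ 0
    (hpde : ∀ (x : Fin N → ℝ) (t : ℝ), t < 0 →
      0 ≤ deriv (u x) t + c * ∫ q, iteratedFDeriv ℝ 2 (fun y => u y t) x ![q, q] ∂a)
    -- (iii) final-time bound
    (C : ℝ) (hC : ∀ x : Fin N → ℝ, u x (-δ) - vecMax x ≤ C)
    -- (iv) integrability, vanishing at -∞, and regularity of the transform
    (hint : ∀ x : Fin N → ℝ, IntegrableOn (fun t => Real.exp t * u x t) (Set.Iio (-δ)))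
    (hint' : ∀ x : Fin N → ℝ,
      IntegrableOn (fun t => Real.exp t * deriv (u x) t) (Set.Iio (-δ)))
    (hlim : ∀ x : Fin N → ℝ,
      Filter.Tendsto (fun t => Real.exp t * u x t) Filter.atBot (nhds 0))
    (uhat : (Fin N → ℝ) → ℝ)
    (huhat : ∀ x, uhat x = Real.exp δ * (∫ t in Set.Iio (-δ), Real.exp t * u x t) - C)
    (huhat_smooth : ContDiff ℝ 2 uhat)
    (huhat_hess : ∀ (x q : Fin N → ℝ),
      iteratedFDeriv ℝ 2 uhat x ![q, q] =
        Real.exp δ * ∫ t in Set.Iio (-δ),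
          Real.exp t * iteratedFDeriv ℝ 2 (fun y => u y t) x ![q, q])
    -- (v) joint integrability of the Hessian quadratic form
    (hprod : ∀ x : Fin N → ℝ,
      Integrable (fun p : (Fin N → ℝ) × ℝ =>
          Real.exp p.2 * iteratedFDeriv ℝ 2 (fun y => u y p.2) x ![p.1, p.1])
        (a.prod (volume.restrict (Set.Iio (-δ))))) :
    (∀ (x : Fin N → ℝ) (c' : ℝ), uhat (fun j => x j + c') = uhat x + c') ∧
      ∀ x : Fin N → ℝ,
        uhat x ≤ vecMax x + c * ∫ q, iteratedFDeriv ℝ 2 uhat x ![q, q] ∂a := by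
  have hneg {t : ℝ} (ht : t ≤ -δ) : t < 0 := ht.trans_lt (neg_lt_zero.2 hδ.1)
  have hderiv (x) (t) (ht : t ≤ -δ) : HasDerivAt (u x) (deriv (u x) t) t :=
    (((hut x).differentiableOn one_ne_zero).differentiableAt
      (Iio_mem_nhds (hneg ht))).hasDerivAt
  have hones (x : Fin N → ℝ) (c' : ℝ) : (fun j ↦ x j + c') = x + c' • 1 := by ext; simp
  simp only [hones] at hlin ⊢
  exact fixed_horizon_to_geometric_lower_bound_general
    (L := fun f x q ↦ iteratedFDeriv ℝ 2 f x ![q, q]) hderiv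
    (fun x t ht ↦ hlin x t (hneg ht.le)) (fun x t ht ↦ hpde x t (hneg ht.le))
    hC hint hint' hlim huhat huhat_hess hprod
end

section
/- Let N ≥ 2, δ ∈ (0,1). Let ŵ : ℝ^N → ℝ be three times continuously differentiable and suppose: (i) ŵ(x + c𝟙) = ŵ(x) + c for all x ∈ ℝ^N and c ∈ ℝ; (ii) ŵ is nondecreasing in each coordinate; (iii) ŵ(x) ≥ max_i x_i + ((1−δ)/(2δ)) sup_{q ∈ [−1,1]^N} ⟨D²ŵ(x)·q, q⟩ for all x; (iv) there is E₀ ≥ 0 with max_i x_i − ŵ(x) ≤ E₀ for all x; (v) there is K ≥ 0 with −D³ŵ(y)[q,q,q] ≤ 6K for all y ∈ ℝ^N and all q ∈ [−1,1]^N. Then for every x ∈ ℝ^N and every n ∈ ℕ, h(x,n) ≤ ŵ(x) + E(n), where E(n) = (1−δ)^n E₀ + Σ_{τ=1}^n (1−δ)^τ K and h is the dynamic-programming value of the game against the player p(x) = ∇ŵ(x). -/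
open MeasureTheory Real

/-- Dynamic-programming value of the finite-horizon geometric-stopping expert game
for the player `p(x) = ∇w(x)` against a worst-case adversary:
`h(x,0) = max_i x_i` and
`h(x,n+1) = δ max_i x_i + (1-δ) sup_{q ∈ [-1,1]^N} Σ_i ∂_i w(x) · h(x + q_i 𝟙 - q, n)`. -/
noncomputable def hVal {N : ℕ} (δ : ℝ) (w : (Fin N → ℝ) → ℝ) :
    ℕ → (Fin N → ℝ) → ℝ
  | 0 => fun x => vecMax x
  | n + 1 => fun x =>
      δ * vecMax x + (1 - δ) *
        ⨆ q : (Set.Icc (-1 : Fin N → ℝ) 1),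
          ∑ i, fderiv ℝ w x (Pi.single i 1) *
            hVal δ w n (fun j => x j + (q : Fin N → ℝ) i - (q : Fin N → ℝ) j)

/-!
A second-order Taylor expansion of `w` at `x` in the direction `-q` shows that the move `q` of the
adversary costs at most `½ D²w(x)[q, q] + K`: the first-order term is cancelled exactly by the
player's mixed strategy `∇w(x)`, a probability vector. The supersolution inequality bounds
the stopping payoff plus the Hessian term by `δ w(x)`, so an error `E` at horizon `n` becomes
`(1 - δ) (E + K)` at horizon `n + 1`, and `E(n)` solves this recursion.
-/

section Taylor

variable {E : Type*} [NormedAddCommGroup E] [NormedSpace ℝ E] {f : E → ℝ} {x v : E}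

open Nat in
theorem map_add_le_sum_add_of_iteratedFDeriv_le {n : ℕ} {M : ℝ}
    (hf : ∀ t ∈ Set.Icc (0 : ℝ) 1, ContDiffAt ℝ (n + 1) f (x + t • v))
    (hM : ∀ t ∈ Set.Icc (0 : ℝ) 1, iteratedFDeriv ℝ (n + 1) f (x + t • v) (fun _ ↦ v) ≤ M) :
    f (x + v) ≤ ∑ k ∈ Finset.range (n + 1), (k ! : ℝ)⁻¹ * iteratedFDeriv ℝ k f x (fun _ ↦ v) +
      M / (n + 1)! := by
  have hcont : ContinuousOn
      (fun t : ℝ ↦ (1 - t) ^ n * iteratedFDeriv ℝ (n + 1) f (x + t • v) (fun _ ↦ v))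
      (Set.Icc 0 1) := by
    intro t ht
    have hderiv : ContinuousAt (iteratedFDeriv ℝ (n + 1) f) (x + t • v) :=
      ((hf t ht).iteratedFDeriv_right (i := n + 1) (m := 0) (by simp)).continuousAt
    have hline : ContinuousAt (fun s : ℝ ↦ iteratedFDeriv ℝ (n + 1) f (x + s • v)) t :=
      hderiv.comp (f := fun s : ℝ ↦ x + s • v) (by fun_prop)
    exact (by fun_prop : ContinuousWithinAt (fun s : ℝ ↦ (1 - s) ^ n) (Set.Icc 0 1) t).mul
      (hline.continuousWithinAt.eval_const _)
  have hremainder :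
      ∫ t in (0 : ℝ)..1, (1 - t) ^ n * iteratedFDeriv ℝ (n + 1) f (x + t • v) (fun _ ↦ v) ≤
        M / (n + 1) :=
    calc
      _ ≤ ∫ t in (0 : ℝ)..1, (1 - t) ^ n * M :=
        intervalIntegral.integral_mono_on zero_le_one
          (hcont.intervalIntegrable_of_Icc zero_le_one)
          (Continuous.intervalIntegrable (by fun_prop) _ _) fun t ht ↦
            mul_le_mul_of_nonneg_left (hM t ht) (pow_nonneg (sub_nonneg.2 ht.2) n)
      _ = M / (n + 1) := by
        rw [intervalIntegral.integral_mul_const,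
          intervalIntegral.integral_comp_sub_left (fun s : ℝ ↦ s ^ n) 1]
        simp [field]
  rw [map_add_eq_sum_add_integral_iteratedFDeriv hf]
  simp only [smul_eq_mul]
  gcongr
  calc
    _ ≤ (n ! : ℝ)⁻¹ * (M / (n + 1)) := by gcongr
    _ = M / (n + 1)! := by rw [Nat.factorial_succ]; push_cast; field_simp

theorem map_sub_add_fderiv_le_of_neg_iteratedFDeriv_le (hf : ContDiff ℝ 3 f) {K : ℝ}
    (hK : ∀ y, -iteratedFDeriv ℝ 3 f y (fun _ ↦ v) ≤ 6 * K) :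
    f (x - v) + fderiv ℝ f x v ≤ f x + 1 / 2 * iteratedFDeriv ℝ 2 f x (fun _ ↦ v) + K := by
  have map_neg_diag (k : ℕ) (y : E) : iteratedFDeriv ℝ k f y (fun _ ↦ -v) =
      (-1) ^ k * iteratedFDeriv ℝ k f y (fun _ ↦ v) := by
    simpa using (iteratedFDeriv ℝ k f y).map_smul_univ (fun _ ↦ (-1 : ℝ)) (fun _ ↦ v)
  have taylor := map_add_le_sum_add_of_iteratedFDeriv_le (x := x) (v := -v) (n := 2) (M := 6 * K)
    (fun _ _ ↦ hf.contDiffAt) fun t _ ↦ by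
      simpa [map_neg_diag, pow_succ] using hK (x + t • -v)
  simp only [map_neg_diag, ← sub_eq_add_neg, Finset.sum_range_succ, Finset.sum_range_zero,
    iteratedFDeriv_zero_apply, iteratedFDeriv_one_apply] at taylor
  norm_num [Nat.factorial] at taylor
  linarith

end Taylor

section Gradient

theorem hasFDerivAt_apply_nonneg_of_monotone {E : Type*} [NormedAddCommGroup E] [NormedSpace ℝ E]
    [PartialOrder E] [IsOrderedAddMonoid E] [IsOrderedModule ℝ E] {f : E → ℝ} {f' : E →L[ℝ] ℝ}
    {x v : E} (hf' : HasFDerivAt f f' x) (hf : Monotone f) (hv : 0 ≤ v) : 0 ≤ f' v := by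
  have hline : Monotone fun t : ℝ ↦ f (x + t • v) := fun s t hst ↦ hf (by gcongr)
  exact HasDerivAt.nonneg_of_monotone (hf'.hasLineDerivAt v) hline

theorem hasFDerivAt_apply_eq_of_map_add_smul {𝕜 E F : Type*} [NontriviallyNormedField 𝕜]
    [NormedAddCommGroup E] [NormedSpace 𝕜 E] [NormedAddCommGroup F] [NormedSpace 𝕜 F]
    {f : E → F} {f' : E →L[𝕜] F} {x v : E} {a : F}
    (hf' : HasFDerivAt f f' x) (hf : ∀ c : 𝕜, f (x + c • v) = f x + c • a) : f' v = a := by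
  have hline : HasLineDerivAt 𝕜 f a x v := by
    simpa [HasLineDerivAt, hf] using ((hasDerivAt_id (0 : 𝕜)).smul_const a).const_add (f x)
  exact (hf'.hasLineDerivAt v).unique hline

variable {ι : Type*} [Fintype ι] [DecidableEq ι] {w : (ι → ℝ) → ℝ} {x q : ι → ℝ}

theorem sum_apply_single_one_mul {R F : Type*} [CommSemiring R] [FunLike F (ι → R) R]
    [LinearMapClass F R (ι → R) R] (L : F) (v : ι → R) :
    ∑ i, L (Pi.single i 1) * v i = L v := by
  conv_rhs => rw [pi_eq_sum_univ' v]
  simp only [map_sum, map_smul, smul_eq_mul, mul_comm]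

theorem sum_fderiv_single_one_eq_one (hw : DifferentiableAt ℝ w x)
    (hlin : ∀ c, w (fun j ↦ x j + c) = w x + c) : ∑ i, fderiv ℝ w x (Pi.single i 1) = 1 := by
  have hones : fderiv ℝ w x 1 = 1 :=
    hasFDerivAt_apply_eq_of_map_add_smul hw.hasFDerivAt fun c ↦ by
      simpa [Pi.add_def] using hlin c
  simpa [hones] using sum_apply_single_one_mul (fderiv ℝ w x) 1

theorem fderiv_single_one_mem_stdSimplex (hw : DifferentiableAt ℝ w x)
    (hlin : ∀ c, w (fun j ↦ x j + c) = w x + c) (hmono : Monotone w) :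
    (fun i ↦ fderiv ℝ w x (Pi.single i 1)) ∈ stdSimplex ℝ ι :=
  ⟨fun _ ↦ hasFDerivAt_apply_nonneg_of_monotone hw.hasFDerivAt hmono
    (Pi.single_nonneg.2 zero_le_one), sum_fderiv_single_one_eq_one hw hlin⟩

theorem sum_fderiv_mul_map_add_sub (hw : DifferentiableAt ℝ w x)
    (hlin : ∀ y c, w (fun j ↦ y j + c) = w y + c) :
    ∑ i, fderiv ℝ w x (Pi.single i 1) * w (fun j ↦ x j + q i - q j) =
      w (x - q) + fderiv ℝ w x q := by
  have hshift (i : ι) : w (fun j ↦ x j + q i - q j) = w (x - q) + q i := by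
    simp only [← hlin, Pi.sub_apply, sub_add_eq_add_sub]
  simp only [hshift, mul_add, Finset.sum_add_distrib, ← Finset.sum_mul,
    sum_fderiv_single_one_eq_one hw (hlin x), sum_apply_single_one_mul, one_mul]

theorem sum_fderiv_mul_le_of_le_add (hw : ContDiff ℝ 3 w)
    (hlin : ∀ y c, w (fun j ↦ y j + c) = w y + c) (hmono : Monotone w) {K E : ℝ}
    (hK : ∀ y, -iteratedFDeriv ℝ 3 w y (fun _ ↦ q) ≤ 6 * K)
    {g : (ι → ℝ) → ℝ} (hg : ∀ y, g y ≤ w y + E) :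
    ∑ i, fderiv ℝ w x (Pi.single i 1) * g (fun j ↦ x j + q i - q j) ≤
      w x + 1 / 2 * iteratedFDeriv ℝ 2 w x (fun _ ↦ q) + K + E := by
  have hdiff : DifferentiableAt ℝ w x := hw.differentiable (by norm_num) x
  obtain ⟨hgrad_nonneg, hgrad_sum⟩ := fderiv_single_one_mem_stdSimplex hdiff (hlin x) hmono
  calc
    _ ≤ ∑ i, fderiv ℝ w x (Pi.single i 1) * (w (fun j ↦ x j + q i - q j) + E) :=
      Finset.sum_le_sum fun i _ ↦ mul_le_mul_of_nonneg_left (hg _) (hgrad_nonneg i)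
    _ = w (x - q) + fderiv ℝ w x q + E := by
      simp only [mul_add, Finset.sum_add_distrib, sum_fderiv_mul_map_add_sub hdiff hlin,
        ← Finset.sum_mul, hgrad_sum, one_mul]
    _ ≤ w x + 1 / 2 * iteratedFDeriv ℝ 2 w x (fun _ ↦ q) + K + E := by
      linarith [map_sub_add_fderiv_le_of_neg_iteratedFDeriv_le (x := x) hw hK]

end Gradient

section Supersolution

variable {ι E : Type*} [TopologicalSpace E] [AddCommMonoid E] [Module ℝ E]
  (A : ContinuousMultilinearMap ℝ (fun _ : ι ↦ E) ℝ) {s : Set E} {q : E}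

theorem continuousMultilinearMap_diag_le_iSup (hs : IsCompact s) (hq : q ∈ s) :
    A (fun _ ↦ q) ≤ ⨆ p : s, A (fun _ ↦ p) :=
  le_ciSup_set (hs.bddAbove_image (f := fun p ↦ A fun _ ↦ p) (by fun_prop)) hq

theorem mul_add_half_mul_diag_le_of_add_mul_iSup_le (hs : IsCompact s) {δ M W : ℝ}
    (hδ : δ ∈ Set.Ioc 0 1) (hW : M + (1 - δ) / (2 * δ) * ⨆ p : s, A (fun _ ↦ p) ≤ W) (hq : q ∈ s) :
    δ * M + (1 - δ) / 2 * A (fun _ ↦ q) ≤ δ * W := by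
  obtain ⟨hδ_pos, hδ_le⟩ := hδ
  have hcoef : 0 ≤ (1 - δ) / (2 * δ) := div_nonneg (sub_nonneg.2 hδ_le) (by positivity)
  calc
    δ * M + (1 - δ) / 2 * A (fun _ ↦ q) = δ * (M + (1 - δ) / (2 * δ) * A (fun _ ↦ q)) := by
      field_simp
    _ ≤ δ * (M + (1 - δ) / (2 * δ) * ⨆ p : s, A (fun _ ↦ p)) := by
      gcongr δ * (M + ?_)
      exact mul_le_mul_of_nonneg_left (continuousMultilinearMap_diag_le_iSup A hs hq) hcoef
    _ ≤ δ * W := by gcongr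

end Supersolution

theorem hVal_succ_le_of_hVal_le {N : ℕ} {δ : ℝ} (hδ : δ ≤ 1) {w : (Fin N → ℝ) → ℝ}
    (hw : ContDiff ℝ 3 w) (hlin : ∀ y c, w (fun j ↦ y j + c) = w y + c) (hmono : Monotone w)
    {x : Fin N → ℝ}
    (hsuper : ∀ q ∈ Set.Icc (-1 : Fin N → ℝ) 1,
      δ * vecMax x + (1 - δ) / 2 * iteratedFDeriv ℝ 2 w x (fun _ ↦ q) ≤ δ * w x)
    {K : ℝ} (hK : ∀ y, ∀ q ∈ Set.Icc (-1 : Fin N → ℝ) 1,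
      -iteratedFDeriv ℝ 3 w y (fun _ ↦ q) ≤ 6 * K)
    {n : ℕ} {E : ℝ} (hn : ∀ y, hVal δ w n y ≤ w y + E) :
    hVal δ w (n + 1) x ≤ w x + (1 - δ) * (E + K) := by
  have : Nonempty (Set.Icc (-1 : Fin N → ℝ) 1) := ⟨0, by simp⟩
  have hcontinue : 0 ≤ 1 - δ := sub_nonneg.2 hδ
  simp only [hVal, Real.mul_iSup_of_nonneg hcontinue]
  rw [← le_sub_iff_add_le']
  refine ciSup_le fun ⟨q, hq⟩ ↦ ?_
  have hmove := mul_le_mul_of_nonneg_left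
    (sum_fderiv_mul_le_of_le_add (x := x) hw hlin hmono (hK · q hq) hn) hcontinue
  linarith [hsuper q hq]

theorem pow_succ_mul_add_sum_Icc_pow_mul {R : Type*} [CommSemiring R] (r a b : R) (n : ℕ) :
    r ^ (n + 1) * a + ∑ τ ∈ Finset.Icc 1 (n + 1), r ^ τ * b =
      r * (r ^ n * a + ∑ τ ∈ Finset.Icc 1 n, r ^ τ * b + b) := by
  have hsum : ∑ τ ∈ Finset.Icc 1 (n + 1), r ^ τ * b =
      r * (∑ τ ∈ Finset.Icc 1 n, r ^ τ * b + b) := by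
    induction n with
    | zero => simp
    | succ n ih =>
      calc
        ∑ τ ∈ Finset.Icc 1 (n + 2), r ^ τ * b
          = ∑ τ ∈ Finset.Icc 1 (n + 1), r ^ τ * b + r ^ (n + 2) * b :=
            Finset.sum_Icc_succ_top (by lia) _
        _ = r * (∑ τ ∈ Finset.Icc 1 n, r ^ τ * b + b) + r ^ (n + 2) * b := by rw [ih]
        _ = r * (∑ τ ∈ Finset.Icc 1 (n + 1), r ^ τ * b + b) := by
          rw [Finset.sum_Icc_succ_top (by lia)]
          ring
  rw [hsum]
  ring

theorem geometric_horizon_upper_bound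
    {N : ℕ} (hN : 2 ≤ N) (δ : ℝ) (hδ : δ ∈ Set.Ioo (0 : ℝ) 1)
    (what : (Fin N → ℝ) → ℝ) (hw : ContDiff ℝ 3 what)
    -- (i) linearity in the direction of the all-ones vector
    (hlin : ∀ (x : Fin N → ℝ) (c : ℝ), what (fun j => x j + c) = what x + c)
    -- (ii) nondecreasing in each coordinate
    (hmono : Monotone what)
    -- (iii) the supersolution inequality
    (hsuper : ∀ x, what x ≥ vecMax x +
      (1 - δ) / (2 * δ) *
        ⨆ q : (Set.Icc (-1 : Fin N → ℝ) 1),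
          iteratedFDeriv ℝ 2 what x ![(q : Fin N → ℝ), (q : Fin N → ℝ)])
    -- (iv) uniform lower bound at infinity
    (E₀ : ℝ) (hE₀ : 0 ≤ E₀) (hbound : ∀ x, vecMax x - what x ≤ E₀)
    -- (v) third-derivative bound
    (K : ℝ) (hK : 0 ≤ K)
    (hD3 : ∀ (y : Fin N → ℝ), ∀ q ∈ Set.Icc (-1 : Fin N → ℝ) 1,
      -iteratedFDeriv ℝ 3 what y ![q, q, q] ≤ 6 * K) :
    ∀ (x : Fin N → ℝ) (n : ℕ),
      hVal δ what n x ≤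
        what x + ((1 - δ) ^ n * E₀ + ∑ τ ∈ Finset.Icc 1 n, (1 - δ) ^ τ * K) := by
  simp only [Matrix.vec_single_eq_const, Matrix.vecCons_const] at hsuper hD3
  intro x n
  induction n generalizing x with
  | zero => simpa [hVal, add_comm] using hbound x
  | succ n ih =>
    rw [pow_succ_mul_add_sum_Icc_pow_mul]
    exact hVal_succ_le_of_hVal_le hδ.2.le hw hlin hmono
      (fun q hq ↦ mul_add_half_mul_diag_le_of_add_mul_iSup_le _ isCompact_Icc
        (Set.Ioo_subset_Ioc_self hδ) (hsuper x) hq) hD3 ih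
end

section
/- Let N ≥ 2, δ ∈ (0,1), set c = (1−δ)/(2δ). Let w : ℝ^N × (−∞,0] → ℝ be twice continuously differentiable in x and continuously differentiable in t on ℝ^N × (−∞,0), and suppose: (i) w(x + c'𝟙, t) = w(x,t) + c' for all x, t < 0, c' ∈ ℝ; (ii) w(·,t) is nondecreasing in each coordinate for each t < 0; (iii) ∂_t w(x,t) + c · sup_{q ∈ [−1,1]^N} ⟨D²w(x,t)·q, q⟩ ≤ 0 for all x and t < 0; (iv) there is a constant C with max_i x_i − w(x,−δ) ≤ C for all x; (v) for each x the functions t ↦ e^t w(x,t), t ↦ e^t ∂_t w(x,t), and t ↦ e^t sup_{q ∈ [−1,1]^N} ⟨D²w(x,t)·q,q⟩ are integrable on (−∞,−δ), lim_{t→−∞} e^t w(x,t) = 0, and ŵ(x) := e^δ ∫_{−∞}^{−δ} e^t w(x,t) dt + C is twice continuously differentiable with D²ŵ(x) = e^δ ∫_{−∞}^{−δ} e^t D²w(x,t) dt. Then ŵ is nondecreasing in each coordinate, satisfies ŵ(x + c'𝟙) = ŵ(x) + c' for all x, c', and ŵ(x) ≥ max_i x_i + c · sup_{q ∈ [−1,1]^N}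 ⟨D²ŵ(x)·q, q⟩ for all x ∈ ℝ^N. -/
open MeasureTheory Real

/-!
The weight `e ^ δ * e ^ t` is a probability density on `(-∞, -δ)`, so `ŵ - C` is an average of the
functions `w(·, t)` and inherits monotonicity and equivariance under translations. Integrating by
parts, the average of `w(x, ·)` is `w(x, -δ)` minus the average of `∂ₜw(x, ·)`; the parabolic
inequality bounds the latter above by `-c` times the average of the suprema of the Hessian forms,
and a supremum of averages is at most the average of the suprema.
-/

section LaplaceAverage

/-- The average of `f` over `(-∞, -δ)` against the probability density `e ^ δ * e ^ t`, i.e. the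
Laplace-type transform taking fixed-horizon potentials to geometric-stopping ones. It is `0` when
`e ^ t * f t` is not integrable there. -/
noncomputable def laplaceAverage (δ : ℝ) (f : ℝ → ℝ) : ℝ :=
  exp δ * ∫ t in Set.Iio (-δ), exp t * f t

variable {δ c : ℝ} {f f' g : ℝ → ℝ}

theorem exp_mul_exp_neg (x : ℝ) : exp x * exp (-x) = 1 := by
  rw [← exp_add, add_neg_cancel, exp_zero]

theorem integral_exp_Iio (a : ℝ) : ∫ t in Set.Iio a, exp t = exp a := by
  rw [← integral_Iic_eq_integral_Iio, integral_exp_Iic]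

theorem laplaceAverage_const_mul (δ c : ℝ) (f : ℝ → ℝ) :
    laplaceAverage δ (fun t => c * f t) = c * laplaceAverage δ f := by
  simp only [laplaceAverage, mul_left_comm _ c, integral_const_mul]

theorem laplaceAverage_mono (hf : IntegrableOn (fun t => exp t * f t) (Set.Iio (-δ)))
    (hg : IntegrableOn (fun t => exp t * g t) (Set.Iio (-δ))) (hfg : ∀ t < -δ, f t ≤ g t) :
    laplaceAverage δ f ≤ laplaceAverage δ g :=
  mul_le_mul_of_nonneg_left
    (setIntegral_mono_on hf hg measurableSet_Iio fun t ht =>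
      mul_le_mul_of_nonneg_left (hfg t ht) (exp_pos t).le)
    (exp_pos δ).le

theorem laplaceAverage_nonneg (hf : ∀ t < -δ, 0 ≤ f t) : 0 ≤ laplaceAverage δ f :=
  mul_nonneg (exp_pos δ).le <| setIntegral_nonneg measurableSet_Iio fun t ht =>
    mul_nonneg (exp_pos t).le (hf t ht)

theorem laplaceAverage_mono_of_nonneg (hg : IntegrableOn (fun t => exp t * g t) (Set.Iio (-δ)))
    (hg_nonneg : ∀ t < -δ, 0 ≤ g t) (hfg : ∀ t < -δ, f t ≤ g t) :
    laplaceAverage δ f ≤ laplaceAverage δ g := by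
  by_cases hf : IntegrableOn (fun t => exp t * f t) (Set.Iio (-δ))
  · exact laplaceAverage_mono hf hg hfg
  · have f_average_eq_zero : laplaceAverage δ f = 0 := by
      rw [laplaceAverage, integral_undef hf, mul_zero]
    exact f_average_eq_zero.trans_le (laplaceAverage_nonneg hg_nonneg)

theorem laplaceAverage_eq_add_const (hf : IntegrableOn (fun t => exp t * f t) (Set.Iio (-δ)))
    {r : ℝ} (hgf : ∀ t < -δ, g t = f t + r) :
    laplaceAverage δ g = laplaceAverage δ f + r := by
  have exp_integrable : IntegrableOn exp (Set.Iio (-δ)) :=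
    (integrableOn_exp_Iic (-δ)).mono_set Set.Iio_subset_Iic_self
  have integral_split : ∫ t in Set.Iio (-δ), exp t * g t =
      (∫ t in Set.Iio (-δ), exp t * f t) + exp (-δ) * r := by
    calc ∫ t in Set.Iio (-δ), exp t * g t
        = ∫ t in Set.Iio (-δ), (exp t * f t + exp t * r) :=
          setIntegral_congr_fun measurableSet_Iio fun t ht => by
            simp only [hgf t ht, mul_add]
      _ = (∫ t in Set.Iio (-δ), exp t * f t) + exp (-δ) * r := by
          rw [integral_add hf (exp_integrable.mul_const r), integral_mul_const,
            integral_exp_Iio]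
  rw [laplaceAverage, laplaceAverage, integral_split]
  linear_combination r * exp_mul_exp_neg δ

theorem laplaceAverage_deriv (hcont : ContinuousWithinAt f (Set.Iic (-δ)) (-δ))
    (hderiv : ∀ t < -δ, HasDerivAt f (f' t) t)
    (hf : IntegrableOn (fun t => exp t * f t) (Set.Iio (-δ)))
    (hf' : IntegrableOn (fun t => exp t * f' t) (Set.Iio (-δ)))
    (hlim : Filter.Tendsto (fun t => exp t * f t) Filter.atBot (nhds 0)) :
    laplaceAverage δ f' = f (-δ) - laplaceAverage δ f := by
  have integral_parts :
      (∫ t in Set.Iio (-δ), exp t * f t) + ∫ t in Set.Iio (-δ), exp t * f' t =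
        exp (-δ) * f (-δ) := by
    rw [← integral_add hf hf', ← integral_Iic_eq_integral_Iio,
      integral_Iic_of_hasDerivAt_of_tendsto (continuous_exp.continuousWithinAt.mul hcont)
        (fun t ht => (hasDerivAt_exp t).mul (hderiv t ht))
        ((hf.add hf').congr_set_ae Iio_ae_eq_Iic.symm) hlim, sub_zero,
      Pi.mul_apply]
  rw [laplaceAverage, laplaceAverage]
  linear_combination exp δ * integral_parts + f (-δ) * exp_mul_exp_neg δ

theorem add_mul_laplaceAverage_le (hcont : ContinuousWithinAt f (Set.Iic (-δ)) (-δ))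
    (hderiv : ∀ t < -δ, HasDerivAt f (f' t) t)
    (hf : IntegrableOn (fun t => exp t * f t) (Set.Iio (-δ)))
    (hf' : IntegrableOn (fun t => exp t * f' t) (Set.Iio (-δ)))
    (hg : IntegrableOn (fun t => exp t * g t) (Set.Iio (-δ)))
    (hlim : Filter.Tendsto (fun t => exp t * f t) Filter.atBot (nhds 0))
    (hle : ∀ t < -δ, f' t + c * g t ≤ 0) :
    f (-δ) + c * laplaceAverage δ g ≤ laplaceAverage δ f := by
  have average_deriv_le : laplaceAverage δ f' ≤ -c * laplaceAverage δ g := by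
    rw [← laplaceAverage_const_mul]
    refine laplaceAverage_mono hf' ?_ fun t ht => by linarith [hle t ht]
    simpa only [IntegrableOn, mul_left_comm] using hg.const_mul (-c)
  linarith [laplaceAverage_deriv hcont hderiv hf hf' hlim]

end LaplaceAverage

section QuadSup

variable {E : Type*} [NormedAddCommGroup E] [NormedSpace ℝ E] {K : Set E}

/-- The supremum over `q ∈ K` of the quadratic form `⟨H q, q⟩` of a continuous bilinear form `H`,
encoded as a multilinear map so that it applies to `iteratedFDeriv ℝ 2`. It is a genuine supremum
when `K` is bounded and nonempty. -/
noncomputable def quadSup (K : Set E) (H : E [×2]→L[ℝ] ℝ) : ℝ :=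
  ⨆ q : K, H ![(q : E), (q : E)]

theorem bddAbove_range_quadraticForm (hK : Bornology.IsBounded K) (H : E [×2]→L[ℝ] ℝ) :
    BddAbove (Set.range fun q : K => H ![(q : E), (q : E)]) := by
  obtain ⟨R, hR⟩ := hK.exists_norm_le
  refine ⟨‖H‖ * R ^ 2, ?_⟩
  rintro _ ⟨⟨q, hq⟩, rfl⟩
  calc H ![q, q] ≤ ‖H ![q, q]‖ := le_norm_self _
    _ ≤ ‖H‖ * ‖q‖ ^ 2 := by simpa [Fin.prod_univ_two, sq] using H.le_opNorm ![q, q]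
    _ ≤ ‖H‖ * R ^ 2 := by gcongr; exact hR q hq

theorem le_quadSup (hK : Bornology.IsBounded K) (H : E [×2]→L[ℝ] ℝ) {q : E} (hq : q ∈ K) :
    H ![q, q] ≤ quadSup K H :=
  le_ciSup (bddAbove_range_quadraticForm hK H) ⟨q, hq⟩

theorem quadSup_nonneg (hK : Bornology.IsBounded K) (hK0 : 0 ∈ K) (H : E [×2]→L[ℝ] ℝ) :
    0 ≤ quadSup K H :=
  (H.map_coord_zero 0 rfl).symm.trans_le (le_quadSup hK H hK0)

theorem quadSup_le_laplaceAverage {δ : ℝ} (hK : Bornology.IsBounded K) (hK0 : 0 ∈ K)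
    {H : ℝ → E [×2]→L[ℝ] ℝ} {Hbar : E [×2]→L[ℝ] ℝ}
    (hH : IntegrableOn (fun t => exp t * quadSup K (H t)) (Set.Iio (-δ)))
    (hHbar : ∀ q ∈ K, Hbar ![q, q] = laplaceAverage δ fun t => H t ![q, q]) :
    quadSup K Hbar ≤ laplaceAverage δ fun t => quadSup K (H t) := by
  have : Nonempty K := ⟨⟨0, hK0⟩⟩
  refine ciSup_le fun ⟨q, hq⟩ => (hHbar q hq).trans_le ?_
  -- If `e ^ t * H t ![q, q]` is not integrable, its average is the junk value `0`, which the
  -- nonnegativity of the suprema dominates.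
  exact laplaceAverage_mono_of_nonneg hH (fun t _ => quadSup_nonneg hK hK0 (H t))
    fun t _ => le_quadSup hK (H t) hq

end QuadSup

theorem add_smul_one_eq {ι : Type*} (x : ι → ℝ) (r : ℝ) : x + r • 1 = fun j => x j + r := by
  ext j
  simp

theorem fixed_horizon_to_geometric_upper_bound_general
    {E : Type*} [NormedAddCommGroup E] [NormedSpace ℝ E] [Preorder E]
    {K : Set E} (hK : Bornology.IsBounded K) (hK0 : 0 ∈ K) (e : E)
    {δ c C : ℝ} (hδ : 0 < δ) (hc : 0 ≤ c) {payoff : E → ℝ} {w : E → ℝ → ℝ}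
    (hwt : ∀ x, DifferentiableOn ℝ (w x) (Set.Iio 0))
    (hlin : ∀ x, ∀ t < 0, ∀ r : ℝ, w (x + r • e) t = w x t + r)
    (hmono : ∀ t < 0, Monotone fun y => w y t)
    (H : E → ℝ → E [×2]→L[ℝ] ℝ)
    (hpde : ∀ x, ∀ t < 0, deriv (w x) t + c * quadSup K (H x t) ≤ 0)
    (hC : ∀ x, payoff x - w x (-δ) ≤ C)
    (hint : ∀ x, IntegrableOn (fun t => exp t * w x t) (Set.Iio (-δ)))
    (hint_deriv : ∀ x, IntegrableOn (fun t => exp t * deriv (w x) t) (Set.Iio (-δ)))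
    (hint_quadSup : ∀ x, IntegrableOn (fun t => exp t * quadSup K (H x t)) (Set.Iio (-δ)))
    (hlim : ∀ x, Filter.Tendsto (fun t => exp t * w x t) Filter.atBot (nhds 0))
    (Hbar : E → E [×2]→L[ℝ] ℝ)
    (hHbar : ∀ x, ∀ q ∈ K, Hbar x ![q, q] = laplaceAverage δ fun t => H x t ![q, q]) :
    (Monotone fun x => laplaceAverage δ (w x) + C) ∧
      (∀ x (r : ℝ), laplaceAverage δ (w (x + r • e)) + C = laplaceAverage δ (w x) + C + r) ∧
      ∀ x, payoff x + c * quadSup K (Hbar x) ≤ laplaceAverage δ (w x) + C := by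
  have neg_of_lt {t : ℝ} (ht : t < -δ) : t < 0 := ht.trans (neg_neg_of_pos hδ)
  have has_deriv (x : E) {t : ℝ} (ht : t < 0) : HasDerivAt (w x) (deriv (w x) t) t :=
    ((hwt x).differentiableAt (Iio_mem_nhds ht)).hasDerivAt
  refine ⟨fun x y hxy => ?_, fun x r => ?_, fun x => ?_⟩
  · exact add_le_add_left
      (laplaceAverage_mono (hint x) (hint y) fun t ht => hmono t (neg_of_lt ht) hxy) C
  · rw [laplaceAverage_eq_add_const (hint x) fun t ht => hlin x t (neg_of_lt ht) r, add_right_comm]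
  · have average_bound :
        w x (-δ) + c * laplaceAverage δ (fun t => quadSup K (H x t)) ≤ laplaceAverage δ (w x) :=
      add_mul_laplaceAverage_le (has_deriv x (neg_neg_of_pos hδ)).continuousAt.continuousWithinAt
        (fun t ht => has_deriv x (neg_of_lt ht)) (hint x) (hint_deriv x) (hint_quadSup x) (hlim x)
        fun t ht => hpde x t (neg_of_lt ht)
    have quadSup_bound :
        c * quadSup K (Hbar x) ≤ c * laplaceAverage δ fun t => quadSup K (H x t) :=
      mul_le_mul_of_nonneg_left
        (quadSup_le_laplaceAverage hK hK0 (hint_quadSup x) (hHbar x)) hc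
    linarith [hC x]

theorem fixed_horizon_to_geometric_upper_bound
    {N : ℕ} (hN : 2 ≤ N) (δ : ℝ) (hδ : δ ∈ Set.Ioo (0 : ℝ) 1)
    (c : ℝ) (hc : c = (1 - δ) / (2 * δ))
    (w : (Fin N → ℝ) → ℝ → ℝ)
    (hwx : ∀ t : ℝ, t < 0 → ContDiff ℝ 2 (fun y => w y t))
    (hwt : ∀ x : Fin N → ℝ, ContDiffOn ℝ 1 (w x) (Set.Iio 0))
    -- (i) linearity in the direction of the all-ones vector
    (hlin : ∀ (x : Fin N → ℝ) (t : ℝ), t < 0 → ∀ c' : ℝ,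
      w (fun j => x j + c') t = w x t + c')
    -- (ii) nondecreasing in each coordinate
    (hmono : ∀ t : ℝ, t < 0 → Monotone (fun y => w y t))
    -- (iii) the parabolic inequality w_t + c · sup_{q ∈ [-1,1]^N} ⟨D²w·q,q⟩ ≤ 0
    (hpde : ∀ (x : Fin N → ℝ) (t : ℝ), t < 0 →
      deriv (w x) t + c *
        (⨆ q : (Set.Icc (-1 : Fin N → ℝ) 1),
          iteratedFDeriv ℝ 2 (fun y => w y t) x ![(q : Fin N → ℝ), (q : Fin N → ℝ)]) ≤ 0)
    -- (iv) final-time bound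
    (C : ℝ) (hC : ∀ x : Fin N → ℝ, vecMax x - w x (-δ) ≤ C)
    -- (v) integrability, vanishing at -∞, and regularity of the transform
    (hint : ∀ x : Fin N → ℝ, IntegrableOn (fun t => Real.exp t * w x t) (Set.Iio (-δ)))
    (hint' : ∀ x : Fin N → ℝ,
      IntegrableOn (fun t => Real.exp t * deriv (w x) t) (Set.Iio (-δ)))
    (hint'' : ∀ x : Fin N → ℝ,
      IntegrableOn (fun t => Real.exp t *
        ⨆ q : (Set.Icc (-1 : Fin N → ℝ) 1),
          iteratedFDeriv ℝ 2 (fun y => w y t) x ![(q : Fin N → ℝ), (q : Fin N → ℝ)])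
        (Set.Iio (-δ)))
    (hlim : ∀ x : Fin N → ℝ,
      Filter.Tendsto (fun t => Real.exp t * w x t) Filter.atBot (nhds 0))
    (what : (Fin N → ℝ) → ℝ)
    (hwhat : ∀ x, what x = Real.exp δ * (∫ t in Set.Iio (-δ), Real.exp t * w x t) + C)
    (hwhat_smooth : ContDiff ℝ 2 what)
    (hwhat_hess : ∀ (x q : Fin N → ℝ),
      iteratedFDeriv ℝ 2 what x ![q, q] =
        Real.exp δ * ∫ t in Set.Iio (-δ),
          Real.exp t * iteratedFDeriv ℝ 2 (fun y => w y t) x ![q, q]) :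
    Monotone what ∧
      (∀ (x : Fin N → ℝ) (c' : ℝ), what (fun j => x j + c') = what x + c') ∧
      ∀ x : Fin N → ℝ,
        what x ≥ vecMax x + c *
          ⨆ q : (Set.Icc (-1 : Fin N → ℝ) 1),
            iteratedFDeriv ℝ 2 what x ![(q : Fin N → ℝ), (q : Fin N → ℝ)] := by
  obtain rfl : what = fun x => laplaceAverage δ (w x) + C := funext hwhat
  have hc_nonneg : 0 ≤ c := hc ▸ div_nonneg (sub_nonneg.2 hδ.2.le) (mul_nonneg two_pos.le hδ.1.le)
  simpa only [add_smul_one_eq] using! fixed_horizon_to_geometric_upper_bound_general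
    (Metric.isBounded_Icc (-1) 1) (by simp) 1 hδ.1 hc_nonneg
    (fun x => (hwt x).differentiableOn one_ne_zero)
    (fun x t ht r => by simpa only [add_smul_one_eq] using hlin x t ht r) hmono
    (fun x t => iteratedFDeriv ℝ 2 (fun y => w y t) x) hpde hC hint hint' hint'' hlim
    (iteratedFDeriv ℝ 2 _) fun x q _ => hwhat_hess x q
end

section
/- Let N ≥ 2 and δ ∈ (0,1). Let η > 0 and Φ(x) = (1/η) log(Σ_{k=1}^N e^{η x_k}), and let h be the dynamic-programming value of the game for the exponential weights player p(x)_i = e^{η x_i}/Σ_{k=1}^N e^{η x_k} = ∂_i Φ(x). Then for every x ∈ ℝ^N and every n ∈ ℕ, h(x,n) ≤ Φ(x) + ((1−δ)/(2δ)) η. In particular, taking η = √(2δ log N/(1−δ)), one has h(0,n) ≤ √(2(1−δ) log N / δ) for all n ∈ ℕ. -/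
open MeasureTheory Real

/-- The log-sum-exp (exponential weights) potential. -/
noncomputable def lse {N : ℕ} (η : ℝ) (x : Fin N → ℝ) : ℝ :=
  (1 / η) * Real.log (∑ k, Real.exp (η * x k))

/-!
The value `h` is dominated by every `u ≥ max` that is a supersolution of its recursion, because the
recursion is monotone for a player with nonnegative weights. For exponential weights take
`u = Φ + C`: by Hoeffding's lemma one round raises the expected potential by at most `η / 2`, while
stopping with probability `δ` pays at most `Φ`, so `u` is a supersolution as soon as
`δ * C = (1 - δ) * (η / 2)`.
-/

section HoeffdingLemma

open ProbabilityTheory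

lemma cgf_le_of_mem_Icc {Ω : Type*} {mΩ : MeasurableSpace Ω} {μ : Measure Ω}
    [IsProbabilityMeasure μ] {X : Ω → ℝ} {a b : ℝ} (hX : AEMeasurable X μ)
    (hab : ∀ᵐ ω ∂μ, X ω ∈ Set.Icc a b) (t : ℝ) :
    cgf X μ t ≤ t * μ[X] + t ^ 2 * (b - a) ^ 2 / 8 := by
  have centered_le : cgf (fun ω ↦ X ω - μ[X]) μ t ≤ ((b - a) / 2) ^ 2 * t ^ 2 / 2 := by
    simpa [div_pow] using (hasSubgaussianMGF_of_mem_Icc hX hab).cgf_le t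
  have centered_eq : cgf (fun ω ↦ X ω - μ[X]) μ t = cgf X μ t - t * μ[X] := by
    have mgf_ne_zero : mgf X μ t ≠ 0 := (mgf_pos (integrable_exp_mul_of_mem_Icc hX hab)).ne'
    simp only [cgf, sub_eq_add_neg, mgf_add_const]
    rw [log_mul mgf_ne_zero (exp_ne_zero _), log_exp, mul_neg]
  linarith

lemma log_sum_mul_exp_le_of_mem_Icc {ι : Type*} [Fintype ι] {p v : ι → ℝ} {a b : ℝ}
    (hp : p ∈ stdSimplex ℝ ι) (hv : ∀ i, v i ∈ Set.Icc a b) (t : ℝ) :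
    log (∑ i, p i * exp (t * v i)) ≤ t * ∑ i, p i * v i + t ^ 2 * (b - a) ^ 2 / 8 := by
  let _ : MeasurableSpace ι := ⊤
  let P : PMF ι := PMF.ofFintype (fun i ↦ ENNReal.ofReal (p i)) <| by
    rw [← ENNReal.ofReal_sum_of_nonneg fun i _ ↦ hp.1 i, hp.2, ENNReal.ofReal_one]
  have integral_eq (f : ι → ℝ) : ∫ i, f i ∂P.toMeasure = ∑ i, p i * f i := by
    simp [PMF.integral_eq_sum, P, ENNReal.toReal_ofReal, hp.1]
  simpa only [cgf, mgf, integral_eq] using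
    cgf_le_of_mem_Icc (μ := P.toMeasure) (measurable_from_top (f := v)).aemeasurable
      (.of_forall hv) t

end HoeffdingLemma

section ExpWeights

variable {ι : Type*} [Fintype ι]

/-- The exponential weights (softmax) distribution at inverse temperature `η`, the mixed strategy
of the player. -/
noncomputable def expWeights (η : ℝ) (x : ι → ℝ) (i : ι) : ℝ :=
  exp (η * x i) / ∑ k, exp (η * x k)

variable [Nonempty ι]

lemma sum_exp_pos (x : ι → ℝ) : 0 < ∑ k, exp (x k) :=
  Finset.sum_pos (fun _ _ ↦ exp_pos _) Finset.univ_nonempty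

lemma expWeights_mem_stdSimplex (η : ℝ) (x : ι → ℝ) : expWeights η x ∈ stdSimplex ℝ ι := by
  have sum_pos := sum_exp_pos fun k ↦ η * x k
  refine ⟨fun i ↦ div_nonneg (exp_pos _).le sum_pos.le, ?_⟩
  simp only [expWeights]
  rw [← Finset.sum_div, div_self sum_pos.ne']

end ExpWeights

section LogSumExp

variable {N : ℕ}

lemma lse_zero (η : ℝ) : lse η (0 : Fin N → ℝ) = log N / η := by
  simp [lse, div_eq_inv_mul]

variable [NeZero N] {η : ℝ}

lemma vecMax_le_lse (hη : 0 < η) (x : Fin N → ℝ) : vecMax x ≤ lse η x := by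
  refine ciSup_le fun i ↦ ?_
  have exp_le_sum : exp (η * x i) ≤ ∑ k, exp (η * x k) :=
    Finset.single_le_sum (f := fun k ↦ exp (η * x k)) (fun _ _ ↦ (exp_pos _).le)
      (Finset.mem_univ i)
  rw [lse, one_div_mul_eq_div, le_div_iff₀' hη]
  exact (le_log_iff_exp_le (sum_exp_pos _)).2 exp_le_sum

lemma fderiv_lse_single (hη : η ≠ 0) (x : Fin N → ℝ) (i : Fin N) :
    fderiv ℝ (lse η) x (Pi.single i 1) = expWeights η x i := by
  have hasFDerivAt_exp (k : Fin N) : HasFDerivAt (fun y : Fin N → ℝ ↦ exp (η * y k))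
      (exp (η * x k) • η • ContinuousLinearMap.proj (R := ℝ) (φ := fun _ : Fin N ↦ ℝ) k) x :=
    ((hasFDerivAt_apply k x).const_mul η).exp
  have hasFDerivAt_lse : HasFDerivAt (lse η) _ x :=
    ((HasFDerivAt.fun_sum fun k _ ↦ hasFDerivAt_exp k).log (sum_exp_pos _).ne').const_mul (1 / η)
  rw [hasFDerivAt_lse.fderiv]
  simp only [expWeights, one_div, smul_apply, sum_apply, ContinuousLinearMap.proj_apply,
    Pi.single_apply, smul_eq_mul, mul_ite, mul_one, mul_zero, Finset.sum_ite_eq', Finset.mem_univ,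
    if_true]
  field_simp

lemma lse_add (η : ℝ) (x v : Fin N → ℝ) :
    lse η (x + v) = lse η x + 1 / η * log (∑ i, expWeights η x i * exp (η * v i)) := by
  have sum_ne_zero : ∑ k, exp (η * x k) ≠ 0 := (sum_exp_pos _).ne'
  have sum_add_ne_zero : ∑ k, exp (η * (x + v) k) ≠ 0 := (sum_exp_pos _).ne'
  have ratio_eq : ∑ i, expWeights η x i * exp (η * v i) =
      (∑ k, exp (η * (x + v) k)) / ∑ k, exp (η * x k) := by
    rw [Finset.sum_div]
    refine Finset.sum_congr rfl fun i _ ↦ ?_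
    rw [expWeights, div_mul_eq_mul_div, ← exp_add, Pi.add_apply, mul_add]
  rw [ratio_eq, log_div sum_add_ne_zero sum_ne_zero, lse, lse]
  ring

lemma lse_add_const (hη : η ≠ 0) (x : Fin N → ℝ) (c : ℝ) :
    lse η (x + Function.const _ c) = lse η x + c := by
  simp only [lse_add, Function.const_apply]
  rw [← Finset.sum_mul, (expWeights_mem_stdSimplex η x).2, one_mul, log_exp]
  field_simp

lemma lse_add_le (hη : 0 < η) (x : Fin N → ℝ) {v : Fin N → ℝ} {a b : ℝ}
    (hv : ∀ i, v i ∈ Set.Icc a b) :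
    lse η (x + v) ≤ lse η x + ∑ i, expWeights η x i * v i + η * (b - a) ^ 2 / 8 := by
  have hoeffding := log_sum_mul_exp_le_of_mem_Icc (expWeights_mem_stdSimplex η x) hv η
  calc lse η (x + v)
      = lse η x + 1 / η * log (∑ i, expWeights η x i * exp (η * v i)) := lse_add η x v
    _ ≤ lse η x + 1 / η * (η * ∑ i, expWeights η x i * v i + η ^ 2 * (b - a) ^ 2 / 8) := by
        gcongr
    _ = lse η x + ∑ i, expWeights η x i * v i + η * (b - a) ^ 2 / 8 := by
        field_simp
        ring

lemma sum_expWeights_mul_lse_le (hη : 0 < η) (x : Fin N → ℝ) {q : Fin N → ℝ} {a b : ℝ}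
    (hq : ∀ i, q i ∈ Set.Icc a b) :
    ∑ i, expWeights η x i * lse η (fun j ↦ x j + q i - q j) ≤
      lse η x + η * (b - a) ^ 2 / 8 := by
  have shift (i : Fin N) : lse η (fun j ↦ x j + q i - q j) = lse η (x + -q) + q i := by
    rw [← lse_add_const hη.ne']
    congr 1
    ext j
    simp only [Pi.add_apply, Pi.neg_apply, Function.const_apply]
    ring
  have lse_sub_le := lse_add_le hη x (v := -q) (a := -b) (b := -a)
    fun i ↦ ⟨neg_le_neg (hq i).2, neg_le_neg (hq i).1⟩
  calc ∑ i, expWeights η x i * lse η (fun j ↦ x j + q i - q j)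
      = lse η (x + -q) + ∑ i, expWeights η x i * q i := by
        simp only [shift, mul_add, Finset.sum_add_distrib]
        rw [← Finset.sum_mul, (expWeights_mem_stdSimplex η x).2, one_mul]
    _ ≤ lse η x + η * (b - a) ^ 2 / 8 := by
        simp only [Pi.neg_apply, mul_neg, Finset.sum_neg_distrib] at lse_sub_le
        linarith

end LogSumExp

section Game

variable {N : ℕ} {δ : ℝ}

lemma hVal_le_of_supersolution (hδ : δ ≤ 1) {w u : (Fin N → ℝ) → ℝ}
    (hw : ∀ x i, 0 ≤ fderiv ℝ w x (Pi.single i 1)) (vecMax_le : ∀ x, vecMax x ≤ u x)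
    (step_le : ∀ x, ∀ q ∈ Set.Icc (-1 : Fin N → ℝ) 1,
      δ * vecMax x + (1 - δ) * ∑ i, fderiv ℝ w x (Pi.single i 1) *
        u (fun j ↦ x j + q i - q j) ≤ u x)
    (n : ℕ) (x : Fin N → ℝ) : hVal δ w n x ≤ u x := by
  have continue_nonneg : 0 ≤ 1 - δ := sub_nonneg.2 hδ
  induction n generalizing x with
  | zero => exact vecMax_le x
  | succ n ih =>
    have : Nonempty (Set.Icc (-1 : Fin N → ℝ) 1) := ⟨0, by simp, by simp⟩
    simp only [hVal]
    rw [mul_iSup_of_nonneg continue_nonneg, ← le_sub_iff_add_le']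
    refine ciSup_le fun ⟨q, hq⟩ ↦ le_sub_iff_add_le'.2 (le_trans ?_ (step_le x q hq))
    gcongr with i
    · exact hw x i
    · exact ih _

lemma hVal_lse_le [NeZero N] (hδ : δ ∈ Set.Ioc (0 : ℝ) 1) {η : ℝ} (hη : 0 < η) (n : ℕ)
    (x : Fin N → ℝ) : hVal δ (lse η) n x ≤ lse η x + (1 - δ) / (2 * δ) * η := by
  obtain ⟨δ_pos, δ_le_one⟩ := hδ
  have continue_nonneg : 0 ≤ 1 - δ := sub_nonneg.2 δ_le_one
  set C := (1 - δ) / (2 * δ) * η with C_def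
  have C_nonneg : 0 ≤ C :=
    mul_nonneg (div_nonneg continue_nonneg (by positivity)) hη.le
  have balance : δ * C = (1 - δ) * (η / 2) := by
    rw [C_def]
    field_simp
  refine hVal_le_of_supersolution (u := fun y ↦ lse η y + C) δ_le_one (fun y i ↦ ?_)
    (fun y ↦ le_add_of_le_of_nonneg (vecMax_le_lse hη y) C_nonneg) (fun y q hq ↦ ?_) n x
  · rw [fderiv_lse_single hη.ne']
    exact (expWeights_mem_stdSimplex η y).1 i
  · have round_le : ∑ i, expWeights η y i * lse η (fun j ↦ y j + q i - q j) ≤ lse η y + η / 2 :=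
      (sum_expWeights_mul_lse_le (a := -1) (b := 1) hη y
        fun i ↦ ⟨hq.1 i, hq.2 i⟩).trans_eq (by ring)
    simp only [fderiv_lse_single hη.ne', mul_add, Finset.sum_add_distrib]
    rw [← Finset.sum_mul, (expWeights_mem_stdSimplex η y).2, one_mul]
    calc δ * vecMax y +
          ((1 - δ) * ∑ i, expWeights η y i * lse η (fun j ↦ y j + q i - q j) + (1 - δ) * C)
        ≤ δ * lse η y + ((1 - δ) * (lse η y + η / 2) + (1 - δ) * C) := by
          gcongr
          exact vecMax_le_lse hη y
      _ = lse η y + C := by linarith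

end Game

lemma div_sqrt_div_add_mul_sqrt_div (a : ℝ) {b : ℝ} (hb : 0 < b) :
    a / √(a / b) + b * √(a / b) = √(4 * a * b) := by
  have div_eq : a / √(a / b) = b * √(a / b) := by
    calc a / √(a / b) = b * (a / b / √(a / b)) := by
          rw [← mul_div_assoc, mul_div_cancel₀ a hb.ne']
      _ = b * √(a / b) := by rw [div_sqrt]
  calc a / √(a / b) + b * √(a / b) = √((2 * b) ^ 2) * √(a / b) := by
        rw [div_eq, sqrt_sq (by positivity)]
        ring
    _ = √(4 * a * b) := by
        rw [← sqrt_mul (sq_nonneg _)]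
        congr 1
        field_simp
        ring

theorem exponential_weights_upper_bound
    {N : ℕ} (hN : 2 ≤ N) (δ : ℝ) (hδ : δ ∈ Set.Ioo (0 : ℝ) 1)
    (η : ℝ) (hη : 0 < η) :
    (∀ (x : Fin N → ℝ) (n : ℕ),
      hVal δ (lse η) n x ≤ lse η x + (1 - δ) / (2 * δ) * η) ∧
    (η = Real.sqrt (2 * δ * Real.log N / (1 - δ)) →
      ∀ n : ℕ, hVal δ (lse η) n (0 : Fin N → ℝ) ≤ Real.sqrt (2 * (1 - δ) * Real.log N / δ)) := by
  have : NeZero N := ⟨by lia⟩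
  have δ_pos : 0 < δ := hδ.1
  have continue_pos : 0 < 1 - δ := sub_pos.2 hδ.2
  have value_le := hVal_lse_le (N := N) (Set.Ioo_subset_Ioc_self hδ) hη
  refine ⟨fun x n ↦ value_le n x, fun η_eq n ↦ ?_⟩
  calc hVal δ (lse η) n 0
      ≤ log N / η + (1 - δ) / (2 * δ) * η := lse_zero (N := N) η ▸ value_le n 0
    _ = √(4 * log N * ((1 - δ) / (2 * δ))) := by
        rw [← div_sqrt_div_add_mul_sqrt_div (log N) (by positivity), η_eq]
        congr 3 <;> field_simp
    _ = √(2 * (1 - δ) * log N / δ) := by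
        congr 1
        field_simp
        ring
end

section
/- Let N ≥ 1, κ > 0, and δ > 0. Then for every x ∈ ℝ^N, |φ(x,−δ) − max_i x_i| ≤ √(2κδ) · E_{Y∼γ_N}[max_i Y_i], where φ(x,−δ) = (2πσ²)^{−N/2} ∫_{ℝ^N} e^{−‖y‖²/(2σ²)} max_k(x_k − y_k) dy with σ² = 2κδ. -/
open MeasureTheory Real ProbabilityTheory

/-- The heat potential. -/
noncomputable def heatPot (N : ℕ) (κ : ℝ) (x : Fin N → ℝ) (t : ℝ) : ℝ :=
  (2 * Real.pi * (-2 * κ * t)) ^ (-(N : ℝ) / 2) *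
    ∫ y : Fin N → ℝ,
      Real.exp (-(∑ i, y i ^ 2) / (2 * (-2 * κ * t))) * (⨆ k, (x k - y k))

/-- The standard Gaussian measure on `ℝ^N` (mean 0, identity covariance). -/
noncomputable def stdGaussian (N : ℕ) : Measure (Fin N → ℝ) :=
  Measure.pi fun _ => gaussianReal 0 1

open scoped NNReal

/-!
The potential `φ(x, t)` is the expectation of `max_k (x_k - Y_k)` for a centered Gaussian vector `Y`
with covariance `-2κt · I`. Subadditivity of the maximum traps `max_k (x_k - Y_k) - max_i x_i`
between `-max_k Y_k` and `max_k (-Y_k)`, whose expectations are `-E[max_k Y_k]` and, by symmetry,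
`E[max_k Y_k]`. The latter is `√(-2κt)` times its value for a standard Gaussian vector.
-/

section Suprema

variable {ι : Type*} [Nonempty ι]

section ConditionallyCompleteLattice

variable {α : Type*} [ConditionallyCompleteLattice α] [AddGroup α] [AddLeftMono α]
  [AddRightMono α] {x y : ι → α}

lemma ciSup_sub_le_ciSup_add_ciSup_neg (hx : BddAbove (Set.range x))
    (hy : BddAbove (Set.range fun i => -y i)) :
    ⨆ i, (x i - y i) ≤ (⨆ i, x i) + ⨆ i, -y i := by
  simpa only [sub_eq_add_neg] using ciSup_add_le_ciSup_add_ciSup hx hy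

lemma ciSup_sub_ciSup_le_ciSup_sub (hxy : BddAbove (Set.range fun i => x i - y i))
    (hy : BddAbove (Set.range y)) :
    (⨆ i, x i) - ⨆ i, y i ≤ ⨆ i, (x i - y i) := by
  simpa only [sub_add_cancel, sub_le_iff_le_add] using ciSup_add_le_ciSup_add_ciSup hxy hy

end ConditionallyCompleteLattice

variable [Finite ι] {Ω : Type*} {mΩ : MeasurableSpace Ω} {μ : Measure Ω}

lemma integrable_iSup {f : ι → Ω → ℝ} (hf : ∀ i, Integrable (f i) μ) :
    Integrable (fun ω => ⨆ i, f i ω) μ := by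
  have := Fintype.ofFinite ι
  have hsup : Integrable (Finset.univ.sup' Finset.univ_nonempty f) μ :=
    Finset.sup'_induction (p := (Integrable · μ)) _ f (fun _ h₁ _ h₂ => h₁.sup h₂) fun i _ => hf i
  refine hsup.congr (.of_forall fun ω => ?_)
  rw [Finset.sup'_apply, Finset.sup'_univ_eq_ciSup]

variable [IsProbabilityMeasure μ] {Y : ι → Ω → ℝ}

lemma integral_iSup_sub_le (hY : ∀ i, Integrable (Y i) μ) (x : ι → ℝ) :
    ∫ ω, (⨆ i, (x i - Y i ω)) ∂μ ≤ (⨆ i, x i) + ∫ ω, (⨆ i, -Y i ω) ∂μ := by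
  have hneg : Integrable (fun ω => ⨆ i, -Y i ω) μ := integrable_iSup fun i => (hY i).neg
  calc ∫ ω, (⨆ i, (x i - Y i ω)) ∂μ
      ≤ ∫ ω, ((⨆ i, x i) + ⨆ i, -Y i ω) ∂μ :=
        integral_mono (integrable_iSup fun i => (integrable_const (x i)).sub (hY i))
          ((integrable_const _).add hneg) fun _ =>
          ciSup_sub_le_ciSup_add_ciSup_neg (Finite.bddAbove_range _) (Finite.bddAbove_range _)
    _ = (⨆ i, x i) + ∫ ω, (⨆ i, -Y i ω) ∂μ := by
        rw [integral_add (integrable_const _) hneg, integral_const, probReal_univ, one_smul]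

lemma iSup_sub_integral_iSup_le (hY : ∀ i, Integrable (Y i) μ) (x : ι → ℝ) :
    (⨆ i, x i) - ∫ ω, (⨆ i, Y i ω) ∂μ ≤ ∫ ω, (⨆ i, (x i - Y i ω)) ∂μ := by
  calc (⨆ i, x i) - ∫ ω, (⨆ i, Y i ω) ∂μ
      = ∫ ω, ((⨆ i, x i) - ⨆ i, Y i ω) ∂μ := by
        rw [integral_sub (integrable_const _) (integrable_iSup hY), integral_const,
          probReal_univ, one_smul]
    _ ≤ ∫ ω, (⨆ i, (x i - Y i ω)) ∂μ :=
        integral_mono ((integrable_const _).sub (integrable_iSup hY))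
          (integrable_iSup fun i => (integrable_const (x i)).sub (hY i))
          fun _ => ciSup_sub_ciSup_le_ciSup_sub (Finite.bddAbove_range _) (Finite.bddAbove_range _)

lemma abs_integral_iSup_sub_sub_iSup_le {ν : Measure (ι → ℝ)} [IsProbabilityMeasure ν]
    [ν.IsNegInvariant] (hν : ∀ i, Integrable (fun y => y i) ν) (x : ι → ℝ) :
    |∫ y, (⨆ i, (x i - y i)) ∂ν - ⨆ i, x i| ≤ ∫ y, (⨆ i, y i) ∂ν := by
  have hsymm : ∫ y, (⨆ i, -y i) ∂ν = ∫ y, (⨆ i, y i) ∂ν :=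
    integral_neg_eq_self (fun y : ι → ℝ => ⨆ i, y i) ν
  have hupper := integral_iSup_sub_le hν x
  have hlower := iSup_sub_integral_iSup_le hν x
  rw [abs_le]
  constructor <;> linarith

end Suprema

section GaussianProducts

variable {ι : Type*} [Fintype ι]

lemma pi_withDensity_ofReal {E : ι → Type*} {mE : ∀ i, MeasurableSpace (E i)}
    {μ : ∀ i, Measure (E i)} [∀ i, SigmaFinite (μ i)] {f : ∀ i, E i → ℝ}
    (hf : ∀ i, Integrable (f i) (μ i)) (hf₀ : ∀ i x, 0 ≤ f i x) :
    Measure.pi (fun i => (μ i).withDensity fun x => ENNReal.ofReal (f i x)) =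
      (Measure.pi μ).withDensity fun y => ENNReal.ofReal (∏ i, f i (y i)) := by
  have := fun i => isFiniteMeasure_withDensity_ofReal (hf i).2
  refine Measure.pi_eq fun s hs => ?_
  have hfs : ∀ i, Integrable (f i) ((μ i).restrict (s i)) := fun i => (hf i).restrict
  calc (Measure.pi μ).withDensity (fun y => ENNReal.ofReal (∏ i, f i (y i))) (Set.univ.pi s)
      = ∫⁻ y, ENNReal.ofReal (∏ i, f i (y i)) ∂Measure.pi fun i => (μ i).restrict (s i) := by
        rw [withDensity_apply _ (.univ_pi hs), Measure.restrict_pi_pi]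
    _ = ENNReal.ofReal (∏ i, ∫ x in s i, f i x ∂μ i) := by
        rw [← ofReal_integral_eq_lintegral_ofReal (.fintype_prod_dep hfs)
          (.of_forall fun y => Finset.prod_nonneg fun i _ => hf₀ i (y i)),
          integral_fintype_prod_eq_prod]
    _ = ∏ i, ENNReal.ofReal (∫ x in s i, f i x ∂μ i) :=
        ENNReal.ofReal_prod_of_nonneg fun i _ => integral_nonneg (hf₀ i)
    _ = ∏ i, (μ i).withDensity (fun x => ENNReal.ofReal (f i x)) (s i) := by
        refine Finset.prod_congr rfl fun i _ => ?_
        rw [withDensity_apply _ (hs i),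
          ofReal_integral_eq_lintegral_ofReal (hfs i) (.of_forall (hf₀ i))]

lemma pi_gaussianReal_eq_withDensity (m : ι → ℝ) {v : ι → ℝ≥0} (hv : ∀ i, v i ≠ 0) :
    Measure.pi (fun i => gaussianReal (m i) (v i)) =
      volume.withDensity fun y => ENNReal.ofReal (∏ i, gaussianPDFReal (m i) (v i) (y i)) := by
  simp only [fun i => gaussianReal_of_var_ne_zero (m i) (hv i)]
  exact pi_withDensity_ofReal (fun i => integrable_gaussianPDFReal (m i) (v i))
    fun i => gaussianPDFReal_nonneg (m i) (v i)

lemma integral_pi_gaussianReal_eq_integral_smul {F : Type*} [NormedAddCommGroup F]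
    [NormedSpace ℝ F] (m : ι → ℝ) {v : ι → ℝ≥0} (hv : ∀ i, v i ≠ 0) (f : (ι → ℝ) → F) :
    ∫ y, f y ∂Measure.pi (fun i => gaussianReal (m i) (v i)) =
      ∫ y, (∏ i, gaussianPDFReal (m i) (v i) (y i)) • f y := by
  rw [pi_gaussianReal_eq_withDensity m hv,
    integral_withDensity_eq_integral_toReal_smul (by fun_prop) (by simp)]
  simp only [ENNReal.toReal_ofReal (Finset.prod_nonneg fun _ _ => gaussianPDFReal_nonneg _ _ _)]

lemma prod_gaussianPDFReal (m : ι → ℝ) (v : ℝ≥0) (y : ι → ℝ) :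
    ∏ i, gaussianPDFReal (m i) v (y i) =
      (2 * π * v) ^ (-(Fintype.card ι : ℝ) / 2) * exp (-(∑ i, (y i - m i) ^ 2) / (2 * v)) := by
  have hbase : 0 ≤ 2 * π * v := by positivity
  have hnorm : (√(2 * π * v))⁻¹ ^ Fintype.card ι =
      (2 * π * v) ^ (-(Fintype.card ι : ℝ) / 2) := by
    rw [sqrt_eq_rpow, ← rpow_neg hbase, ← rpow_mul_natCast hbase]
    ring_nf
  simp only [gaussianPDFReal, Finset.prod_mul_distrib, Finset.prod_const, Finset.card_univ, hnorm,
    ← exp_sum, ← Finset.sum_div, Finset.sum_neg_distrib]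

lemma pi_gaussianReal_map_const_smul (c : ℝ) (m : ι → ℝ) (v : ι → ℝ≥0) :
    (Measure.pi fun i => gaussianReal (m i) (v i)).map (c • ·) =
      Measure.pi fun i => gaussianReal (c * m i) (.mk (c ^ 2) (sq_nonneg c) * v i) := by
  simp only [← gaussianReal_map_const_mul]
  exact Measure.pi_map_pi (f := fun _ => (c * ·)) fun _ => by fun_prop

lemma integral_iSup_pi_gaussianReal (v : ℝ≥0) :
    ∫ y, (⨆ i, y i) ∂Measure.pi (fun _ : ι => gaussianReal 0 v) =
      √v * ∫ y, (⨆ i, y i) ∂Measure.pi (fun _ : ι => gaussianReal 0 1) := by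
  have hscale : Measure.pi (fun _ : ι => gaussianReal 0 v) =
      (Measure.pi fun _ : ι => gaussianReal 0 1).map (√v • ·) := by
    have hvar : NNReal.mk (√v ^ 2) (sq_nonneg _) * 1 = v := by ext; simp
    simp only [pi_gaussianReal_map_const_smul, mul_zero, hvar]
  have hmeas : Measurable fun y : ι → ℝ => ⨆ i, y i := .iSup fun i => by fun_prop
  rw [hscale, integral_map (by fun_prop) hmeas.aestronglyMeasurable, ← integral_const_mul]
  simp only [Pi.smul_apply, smul_eq_mul, Real.mul_iSup_of_nonneg (sqrt_nonneg _)]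

instance isNegInvariant_gaussianReal (v : ℝ≥0) : (gaussianReal 0 v).IsNegInvariant where
  neg_eq_self := gaussianReal_map_neg.trans (by rw [neg_zero])

end GaussianProducts

lemma heatPot_eq_integral_pi_gaussianReal {N : ℕ} {κ t : ℝ} {v : ℝ≥0} (hv : v ≠ 0)
    (hvκt : (v : ℝ) = -2 * κ * t) (x : Fin N → ℝ) :
    heatPot N κ x t =
      ∫ y, (⨆ k, (x k - y k)) ∂Measure.pi (fun _ : Fin N => gaussianReal 0 v) := by
  rw [integral_pi_gaussianReal_eq_integral_smul _ fun _ => hv, heatPot, ← integral_const_mul]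
  simp only [prod_gaussianPDFReal, Fintype.card_fin, sub_zero, hvκt, smul_eq_mul, mul_assoc]

theorem heatPot_final_time_bound
    (N : ℕ) (hN : 1 ≤ N) (κ δ : ℝ) (hκ : 0 < κ) (hδ : 0 < δ) :
    ∀ x : Fin N → ℝ,
      |heatPot N κ x (-δ) - ⨆ i, x i| ≤
        Real.sqrt (2 * κ * δ) * ∫ y, (⨆ k, y k) ∂(stdGaussian N) := by
  intro x
  have : Nonempty (Fin N) := ⟨⟨0, hN⟩⟩
  have hpos : 0 < 2 * κ * δ := by positivity
  lift 2 * κ * δ to ℝ≥0 using hpos.le with v hv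
  rw [heatPot_eq_integral_pi_gaussianReal (NNReal.coe_pos.mp hpos).ne' (by rw [hv]; ring) x]
  calc |∫ y, (⨆ k, (x k - y k)) ∂Measure.pi (fun _ => gaussianReal 0 v) - ⨆ i, x i|
      ≤ ∫ y, (⨆ k, y k) ∂Measure.pi (fun _ : Fin N => gaussianReal 0 v) :=
        abs_integral_iSup_sub_sub_iSup_le (fun _ => integrable_eval IsGaussian.integrable_id) x
    _ = √v * ∫ y, (⨆ k, y k) ∂(stdGaussian N) := integral_iSup_pi_gaussianReal v
end

section
/- Let f(z) = √(2/π) e^{−z²/2} + z · erf(z/√2), where erf(y) = (2/√π) ∫_0^y e^{−s²} ds. Then for every z ≥ 0, −√(2/π) ≤ z − f(z) ≤ 0. -/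
open MeasureTheory Real

/-- The error function `erf(y) = (2/√π) ∫_0^y e^{-s²} ds`. -/
noncomputable def erf (y : ℝ) : ℝ :=
  (2 / Real.sqrt Real.pi) * ∫ s in (0 : ℝ)..y, Real.exp (-s ^ 2)

/-- `f(z) = √(2/π) e^(-z²/2) + z · erf(z/√2)`. -/
noncomputable def fAux (z : ℝ) : ℝ :=
  Real.sqrt (2 / Real.pi) * Real.exp (-z ^ 2 / 2) + z * erf (z / Real.sqrt 2)

/-!
Put `y = z / √2`. Then `z - f z = √2 (y (1 - erf y) - e^{-y²} / √π)`, where `1 - erf y` is a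
multiple of the Gaussian tail `∫_y^∞ e^{-s²} ds`. Since `y ≤ s` on the domain of integration,
`y ∫_y^∞ e^{-s²} ds ≤ ∫_y^∞ s e^{-s²} ds = e^{-y²} / 2`, which is the upper bound. The lower bound
follows from `erf ≤ 1` and `e^{-z²/2} ≤ 1`.
-/

open Set Filter Topology

section GaussianTail

variable {b : ℝ}

lemma tendsto_exp_neg_mul_sq_atTop_nhds_zero (hb : 0 < b) :
    Tendsto (fun s : ℝ => exp (-b * s ^ 2)) atTop (𝓝 0) :=
  tendsto_exp_atBot.comp
    ((tendsto_pow_atTop two_ne_zero).const_mul_atTop_of_neg (neg_lt_zero.mpr hb))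

lemma hasDerivAt_neg_exp_neg_mul_sq_div (hb : b ≠ 0) (s : ℝ) :
    HasDerivAt (fun s => -exp (-b * s ^ 2) / (2 * b)) (s * exp (-b * s ^ 2)) s := by
  refine ((((hasDerivAt_pow 2 s).const_mul (-b)).exp.fun_neg).div_const (2 * b)).congr_deriv ?_
  field_simp
  push_cast
  ring

lemma integral_Ioi_mul_exp_neg_mul_sq (hb : 0 < b) (y : ℝ) :
    ∫ s in Ioi y, s * exp (-b * s ^ 2) = exp (-b * y ^ 2) / (2 * b) := by
  have tendsto_primitive :
      Tendsto (fun s : ℝ => -exp (-b * s ^ 2) / (2 * b)) atTop (𝓝 0) := by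
    simpa using (tendsto_exp_neg_mul_sq_atTop_nhds_zero hb).neg.div_const (2 * b)
  rw [integral_Ioi_of_hasDerivAt_of_tendsto'
    (fun s _ => hasDerivAt_neg_exp_neg_mul_sq_div hb.ne' s)
    (integrable_mul_exp_neg_mul_sq hb).integrableOn tendsto_primitive]
  ring

lemma mul_integral_Ioi_exp_neg_mul_sq_le (hb : 0 < b) (y : ℝ) :
    y * ∫ s in Ioi y, exp (-b * s ^ 2) ≤ exp (-b * y ^ 2) / (2 * b) := by
  rw [← integral_Ioi_mul_exp_neg_mul_sq hb, ← integral_const_mul]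
  refine setIntegral_mono_on ((integrable_exp_neg_mul_sq hb).const_mul y).integrableOn
    (integrable_mul_exp_neg_mul_sq hb).integrableOn measurableSet_Ioi fun s hs => ?_
  exact mul_le_mul_of_nonneg_right (mem_Ioi.mp hs).le (exp_pos _).le

end GaussianTail

lemma one_sub_erf (y : ℝ) : 1 - erf y = 2 / √π * ∫ s in Ioi y, exp (-s ^ 2) := by
  have integrable_gaussian : Integrable fun s : ℝ => exp (-s ^ 2) := by
    simpa using integrable_exp_neg_mul_sq one_pos
  have integral_gaussian_half : ∫ s in Ioi (0 : ℝ), exp (-s ^ 2) = √π / 2 := by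
    simpa using integral_gaussian_Ioi 1
  have normalization : 2 / √π * (√π / 2) = 1 := by
    field_simp
  rw [← normalization, ← integral_gaussian_half, erf, ← mul_sub,
    ← intervalIntegral.integral_interval_add_Ioi (b := y) integrable_gaussian.integrableOn
      integrable_gaussian.integrableOn, add_sub_cancel_left]

lemma erf_le_one (y : ℝ) : erf y ≤ 1 := by
  rw [← sub_nonneg, one_sub_erf]
  positivity

lemma mul_one_sub_erf_le (y : ℝ) : y * (1 - erf y) ≤ exp (-y ^ 2) / √π := by
  have tail_le : y * ∫ s in Ioi y, exp (-s ^ 2) ≤ exp (-y ^ 2) / 2 := by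
    simpa using mul_integral_Ioi_exp_neg_mul_sq_le one_pos y
  calc y * (1 - erf y) = 2 / √π * (y * ∫ s in Ioi y, exp (-s ^ 2)) := by
        rw [one_sub_erf, mul_left_comm]
    _ ≤ 2 / √π * (exp (-y ^ 2) / 2) := by gcongr
    _ = exp (-y ^ 2) / √π := by ring

lemma fAux_sqrt_two_mul (y : ℝ) :
    fAux (√2 * y) = √2 * (exp (-y ^ 2) / √π + y * erf y) := by
  have exponent : -(√2 * y) ^ 2 / 2 = -y ^ 2 := by
    rw [mul_pow, sq_sqrt zero_le_two]
    ring
  rw [fAux, exponent, mul_div_cancel_left₀ y (by positivity), sqrt_div zero_le_two]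
  ring

lemma le_fAux (z : ℝ) : z ≤ fAux z := by
  obtain ⟨y, rfl⟩ : ∃ y, z = √2 * y := ⟨z / √2, by field_simp⟩
  rw [fAux_sqrt_two_mul]
  gcongr
  linarith [mul_one_sub_erf_le y]

lemma fAux_le_add_sqrt_two_div_pi {z : ℝ} (hz : 0 ≤ z) : fAux z ≤ z + √(2 / π) := by
  have exp_le_one : exp (-z ^ 2 / 2) ≤ 1 := exp_le_one_iff.mpr (by linarith [sq_nonneg z])
  calc fAux z ≤ √(2 / π) * 1 + z * 1 := by
        unfold fAux
        gcongr
        exact erf_le_one _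
    _ = z + √(2 / π) := by ring

theorem fAux_two_sided_bound :
    ∀ z : ℝ, 0 ≤ z →
      -Real.sqrt (2 / Real.pi) ≤ z - fAux z ∧ z - fAux z ≤ 0 := by
  intro z hz
  exact ⟨by linarith [fAux_le_add_sqrt_two_div_pi hz], sub_nonpos.mpr (le_fAux z)⟩
end
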